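/- arXiv:1507.07465 — 2 statements merged into one kernel-verified Lean document; each statement's English description precedes it below -/
import Mathlib

section
/- Let 0 ≤ θ ≤ 1/4 and for P ≥ 2 put M = P^θ and H = P·M^{−4}. Then for every ε > 0 there exist η > 0 and C > 0 such that for all P ≥ 2 and all R with 1 ≤ R ≤ P^η one has ∫₀¹ |E₀(α)|² dα ≤ C·P^{1+ε}·H·M², where E₀(α) = Σ_{1≤h≤H} Σ_{1≤l≤2P} Σ_{M<m₁<m₂≤MR} e(8α·l·h³·(m₁⁸−m₂⁸)). -/
open MeasureTheory
open scoped Classical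

/-- `e(α) = exp(2πiα)`. -/
noncomputable def eC (α : ℝ) : ℂ := Complex.exp (2 * Real.pi * Complex.I * α)

/-- With `M = P^θ`, `H = P M⁻⁴`, the exponential sum
`E₀(α) = ∑_{1≤h≤H} ∑_{1≤l≤2P} ∑_{M<m₁<m₂≤MR} e(8α l h³ (m₁⁸ − m₂⁸))`. -/
noncomputable def E0 (P θ R α : ℝ) : ℂ :=
  ∑ h ∈ Finset.Icc (1 : ℤ) ⌊P / (P ^ θ) ^ 4⌋,
    ∑ l ∈ Finset.Icc (1 : ℤ) ⌊2 * P⌋,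
      ∑ m₂ ∈ Finset.Icc (⌊P ^ θ⌋ + 1) ⌊P ^ θ * R⌋,
        ∑ m₁ ∈ Finset.Icc (⌊P ^ θ⌋ + 1) (m₂ - 1),
          eC (8 * α * (l : ℝ) * (h : ℝ) ^ 3 * ((m₁ : ℝ) ^ 8 - (m₂ : ℝ) ^ 8))

theorem div_bound (δ : ℝ) (hδ : 0 < δ) : ∃ C > (0:ℝ), ∀ n : ℕ, n ≠ 0 →
    (n.divisors.card : ℝ) ≤ C * (n : ℝ) ^ δ := by
  set K : ℝ := 1 + 2 / δ with hK
  have hK1 : 1 ≤ K := by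
    have : 0 < 2 / δ := by positivity
    linarith
  obtain ⟨B, hB⟩ := exists_nat_ge ((2:ℝ) ^ (1 / δ))
  refine ⟨K ^ B, by positivity, fun n hn => ?_⟩
  have hfac : ∀ p ∈ n.primeFactors, ((n.factorization p + 1 : ℕ) : ℝ) ≤
      (if p < B then K else 1) * (((p ^ n.factorization p : ℕ) : ℝ) ^ δ) := by
    intro p hp
    have hp2 : (2:ℝ) ≤ p := by exact_mod_cast (Nat.prime_of_mem_primeFactors hp).two_le
    set a := n.factorization p
    have e1 : (((p ^ a : ℕ) : ℝ) ^ δ) = ((p:ℝ) ^ δ) ^ a := by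
      push_cast
      rw [← Real.rpow_natCast, ← Real.rpow_natCast, ← Real.rpow_mul (by positivity),
        ← Real.rpow_mul (by positivity), mul_comm]
    rw [e1]
    split_ifs with h
    · have h1 : 1 + δ / 2 ≤ (p:ℝ) ^ δ := by
        calc 1 + δ / 2 ≤ 1 + δ * Real.log 2 := by
              have := Real.log_two_gt_d9
              nlinarith
          _ ≤ Real.exp (Real.log 2 * δ) := by
              have := Real.add_one_le_exp (Real.log 2 * δ)
              linarith
          _ = (2:ℝ) ^ δ := by rw [Real.rpow_def_of_pos (by norm_num)]
          _ ≤ (p:ℝ) ^ δ := Real.rpow_le_rpow (by norm_num) hp2 hδ.le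
      have h2 : 1 + (a:ℝ) * (δ / 2) ≤ ((p:ℝ) ^ δ) ^ a :=
        (one_add_mul_le_pow (by linarith) a).trans (pow_le_pow_left₀ (by positivity) h1 a)
      have h3 : ((a + 1 : ℕ) : ℝ) ≤ K * (1 + (a:ℝ) * (δ / 2)) := by
        rw [hK]
        have : (1 + 2 / δ) * (1 + (a:ℝ) * (δ / 2)) = (1 + a) + (2 / δ + a * (δ / 2)) := by
          field_simp
          ring
        rw [this]
        have : 0 ≤ 2 / δ + a * (δ / 2) := by positivity
        push_cast
        linarith
      exact h3.trans (mul_le_mul_of_nonneg_left h2 (by linarith))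
    · have h1 : (2:ℝ) ≤ (p:ℝ) ^ δ := by
        have hBp : (B:ℝ) ≤ p := by exact_mod_cast not_lt.mp h
        calc (2:ℝ) = ((2:ℝ) ^ (1 / δ)) ^ δ := by
              rw [← Real.rpow_mul (by norm_num), one_div, inv_mul_cancel₀ hδ.ne', Real.rpow_one]
          _ ≤ (p:ℝ) ^ δ := Real.rpow_le_rpow (by positivity) (hB.trans hBp) hδ.le
      have h2 : ((a + 1 : ℕ) : ℝ) ≤ 2 ^ a := by exact_mod_cast Nat.lt_two_pow_self
      rw [one_mul]
      exact h2.trans (pow_le_pow_left₀ (by norm_num) h1 a)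
  rw [Nat.card_divisors hn]
  push_cast
  calc ∏ p ∈ n.primeFactors, ((n.factorization p : ℝ) + 1)
      ≤ ∏ p ∈ n.primeFactors,
        ((if p < B then K else 1) * (((p ^ n.factorization p : ℕ) : ℝ) ^ δ)) := by
        refine Finset.prod_le_prod (fun _ _ => by positivity) fun p hp => ?_
        exact_mod_cast hfac p hp
    _ = (∏ p ∈ n.primeFactors, (if p < B then K else 1)) * (n:ℝ) ^ δ := by
        rw [Finset.prod_mul_distrib, Real.finsetProd_rpow _ _ (fun _ _ => by positivity),
          ← Nat.cast_prod]
        congr 3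
        exact Nat.prod_factorization_pow_eq_self hn
    _ ≤ K ^ B * (n:ℝ) ^ δ := by
        refine mul_le_mul_of_nonneg_right ?_ (by positivity)
        rw [← Finset.prod_filter, Finset.prod_const]
        refine pow_le_pow_right₀ hK1 ?_
        calc _ ≤ (Finset.range B).card := Finset.card_le_card fun p hp => by
              simpa using (Finset.mem_filter.mp hp).2
          _ = B := Finset.card_range B

theorem int_eC (k : ℤ) : (∫ α in (0:ℝ)..1, eC (α * k)) = if k = 0 then 1 else 0 := by
  unfold eC
  split_ifs with h
  · simp [h]
  · have hc : (2 * Real.pi * Complex.I * k : ℂ) ≠ 0 := by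
      simp [Real.pi_ne_zero, h]
    have := integral_exp_mul_complex (a := 0) (b := 1) hc
    have e : ∀ α : ℝ, (2 * Real.pi * Complex.I * ((α * k : ℝ) : ℂ)) =
      2 * Real.pi * Complex.I * k * α := by intro α; push_cast; ring
    simp_rw [e]
    rw [this]
    have h1 : Complex.exp (2 * Real.pi * Complex.I * k) = 1 :=
      Complex.exp_eq_one_iff.mpr ⟨k, by ring⟩
    simp [h1]

theorem parseval {ι : Type*} (S : Finset ι) (f : ι → ℤ) :
    (∫ α in (0:ℝ)..1, ‖∑ x ∈ S, eC (α * f x)‖ ^ 2) =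
      ∑ x ∈ S, ((S.filter fun y => f y = f x).card : ℝ) := by
  have hcont : ∀ k : ℤ, Continuous fun α : ℝ => eC (α * k) := by
    intro k; unfold eC; fun_prop
  have key : ∀ α : ℝ, ((‖∑ x ∈ S, eC (α * f x)‖ ^ 2 : ℝ) : ℂ) =
      ∑ x ∈ S, ∑ y ∈ S, eC (α * ((f x - f y : ℤ) : ℝ)) := by
    intro α
    push_cast
    rw [← Complex.mul_conj', map_sum, Finset.sum_mul_sum]
    refine Finset.sum_congr rfl fun x _ => Finset.sum_congr rfl fun y _ => ?_
    unfold eC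
    rw [← Complex.exp_conj, ← Complex.exp_add]
    congr 1
    have h2 : (starRingEnd ℂ) 2 = 2 := map_ofNat _ 2
    simp [h2]
    ring
  apply Complex.ofReal_injective
  rw [← intervalIntegral.integral_ofReal]
  simp_rw [key]
  rw [intervalIntegral.integral_finsetSum]
  · rw [Complex.ofReal_sum]
    refine Finset.sum_congr rfl fun x _ => ?_
    rw [intervalIntegral.integral_finsetSum]
    · simp_rw [int_eC, sub_eq_zero, Finset.card_filter]
      push_cast
      exact Finset.sum_congr rfl fun y _ => by by_cases h : f x = f y <;> simp [h, eq_comm]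
    · intro y _
      exact (hcont _).intervalIntegrable _ _
  · intro x _
    exact (continuous_finsetSum _ fun y _ => hcont _).intervalIntegrable _ _

/-- the index set -/
noncomputable def idx (h l a b : ℤ) : Finset (ℤ × ℤ × ℤ × ℤ) :=
  (Finset.Icc 1 h ×ˢ Finset.Icc 1 l ×ˢ Finset.Icc a b ×ˢ Finset.Icc a b).filter
    fun x => x.2.2.2 < x.2.2.1

/-- the phase: (h, l, m₂, m₁) -/
def phase (x : ℤ × ℤ × ℤ × ℤ) : ℤ :=
  8 * x.2.1 * x.1 ^ 3 * (x.2.2.2 ^ 8 - x.2.2.1 ^ 8)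

theorem E0_eq (P θ R α : ℝ) : E0 P θ R α =
    ∑ x ∈ idx ⌊P / (P ^ θ) ^ 4⌋ ⌊2 * P⌋ (⌊P ^ θ⌋ + 1) ⌊P ^ θ * R⌋, eC (α * phase x) := by
  unfold E0 idx
  rw [Finset.sum_filter, Finset.sum_product]
  refine Finset.sum_congr rfl fun h _ => ?_
  rw [Finset.sum_product]
  refine Finset.sum_congr rfl fun l _ => ?_
  rw [Finset.sum_product]
  refine Finset.sum_congr rfl fun m hm => ?_
  rw [← Finset.sum_filter]
  have : Finset.Icc (⌊P ^ θ⌋ + 1) (m - 1) =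
      (Finset.Icc (⌊P ^ θ⌋ + 1) ⌊P ^ θ * R⌋).filter fun x => x < m := by
    ext x
    simp only [Finset.mem_Icc, Finset.mem_filter] at hm ⊢
    omega
  rw [this]
  refine Finset.sum_congr rfl fun n _ => ?_
  congr 1
  unfold phase
  push_cast
  ring

theorem phase_ne {h l a b : ℤ} (ha : 1 ≤ a) {x} (hx : x ∈ idx h l a b) : phase x ≠ 0 := by
  obtain ⟨p, q, m, n⟩ := x
  simp only [idx, Finset.mem_filter, Finset.mem_product, Finset.mem_Icc] at hx
  unfold phase
  have : n ^ 8 < m ^ 8 := pow_lt_pow_left₀ hx.2 (by omega) (by norm_num)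
  have h1 : p ≠ 0 := by omega
  have h2 : q ≠ 0 := by omega
  have h3 : n ^ 8 - m ^ 8 ≠ 0 := by omega
  simp only
  positivity

theorem fiber {h l a b : ℤ} (ha : 1 ≤ a) {x} (hx : x ∈ idx h l a b) :
    ((idx h l a b).filter fun y => phase y = phase x).card ≤
      (phase x).natAbs.divisors.card ^ 4 := by
  set D := (phase x).natAbs.divisors
  have hc : D.card ^ 4 = (D ×ˢ D ×ˢ D ×ˢ D).card := by
    simp only [Finset.card_product]; ring
  rw [hc]
  refine Finset.card_le_card_of_injOn
    (fun y => (y.1.natAbs, y.2.1.natAbs, (y.2.2.1 - y.2.2.2).natAbs, (y.2.2.1 + y.2.2.2).natAbs))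
    ?_ ?_
  · rintro ⟨p, q, m, n⟩ hy
    simp only [Finset.coe_filter, Set.mem_ofPred_eq] at hy
    have hz : (phase x).natAbs ≠ 0 := by simpa using phase_ne ha hx
    have hd : ∀ k : ℤ, k ∣ phase (p, q, m, n) → k.natAbs ∈ D := by
      intro k hk
      rw [hy.2] at hk
      exact Nat.mem_divisors.mpr ⟨Int.natAbs_dvd_natAbs.mpr hk, hz⟩
    simp only [Finset.coe_product, Set.mem_prod, Finset.mem_coe]
    refine ⟨hd _ ⟨8 * q * p ^ 2 * (n ^ 8 - m ^ 8), ?_⟩, hd _ ⟨8 * p ^ 3 * (n ^ 8 - m ^ 8), ?_⟩,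
      hd _ ⟨- (8 * q * p ^ 3 * (m + n) * (m ^ 2 + n ^ 2) * (m ^ 4 + n ^ 4)), ?_⟩,
      hd _ ⟨- (8 * q * p ^ 3 * (m - n) * (m ^ 2 + n ^ 2) * (m ^ 4 + n ^ 4)), ?_⟩⟩ <;>
    · simp only [phase]; ring
  · rintro ⟨p, q, m, n⟩ hy ⟨p', q', m', n'⟩ hy' he
    simp only [Finset.coe_filter, Set.mem_ofPred_eq, idx, Finset.mem_filter, Finset.mem_product,
      Finset.mem_Icc] at hy hy'
    simp only [Prod.mk.injEq] at he ⊢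
    omega

theorem stmt3 (θ : ℝ) (hθ0 : 0 ≤ θ) (hθ1 : θ ≤ 1 / 4) :
    ∀ ε > (0 : ℝ), ∃ η > (0 : ℝ), ∃ C > (0 : ℝ),
      ∀ P : ℝ, 2 ≤ P → ∀ R : ℝ, 1 ≤ R → R ≤ P ^ η →
        (∫ α in (0:ℝ)..1, ‖E0 P θ R α‖ ^ 2)
          ≤ C * P ^ ((1 : ℝ) + ε) * (P / (P ^ θ) ^ 4) * (P ^ θ) ^ 2 := by
  intro ε hε
  obtain ⟨C, hC, hdiv⟩ := div_bound (ε / 88) (by positivity)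
  refine ⟨min (ε / 4) (1 / 8), by positivity, 2 * C ^ 4, by positivity, ?_⟩
  intro P hP R hR1 hR
  have hP0 : 0 < P := by linarith
  have hP1 : 1 ≤ P := by linarith
  have hRε : R ≤ P ^ (ε / 4) :=
    hR.trans (Real.rpow_le_rpow_of_exponent_le hP1 (min_le_left _ _))
  have hR8 : R ≤ P ^ ((1:ℝ) / 8) :=
    hR.trans (Real.rpow_le_rpow_of_exponent_le hP1 (min_le_right _ _))
  have hM1 : 1 ≤ P ^ θ := Real.one_le_rpow hP1 hθ0
  have hM4 : P ^ θ ≤ P ^ ((1:ℝ) / 4) := Real.rpow_le_rpow_of_exponent_le hP1 hθ1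
  simp_rw [E0_eq]
  rw [parseval]
  set M := P ^ θ with hM
  have hM0 : 0 < M := by linarith
  set H := P / M ^ 4 with hH
  have hH0 : 0 < H := by positivity
  have hHP : H ≤ P := div_le_self hP0.le (one_le_pow₀ hM1)
  have ha : 1 ≤ ⌊M⌋ + 1 := by
    have : 0 ≤ ⌊M⌋ := Int.floor_nonneg.mpr hM0.le
    omega
  set S := idx ⌊H⌋ ⌊2 * P⌋ (⌊M⌋ + 1) ⌊M * R⌋ with hS
  have hMR8 : (M * R) ^ 8 ≤ P ^ 3 := by
    calc (M * R) ^ 8 ≤ (P ^ ((1:ℝ) / 4) * P ^ ((1:ℝ) / 8)) ^ 8 := by gcongr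
      _ = P ^ 3 := by
        rw [← Real.rpow_add hP0, ← Real.rpow_natCast, ← Real.rpow_mul hP0.le,
          ← Real.rpow_natCast]
        norm_num
  have hphase : ∀ x ∈ S, ((phase x).natAbs : ℝ) ≤ P ^ 11 := by
    rintro ⟨p, q, m, n⟩ hx
    simp only [hS, idx, Finset.mem_filter, Finset.mem_product, Finset.mem_Icc] at hx
    obtain ⟨⟨⟨hp1, hp2⟩, ⟨hq1, hq2⟩, ⟨hm1, hm2⟩, hn1, hn2⟩, hlt⟩ := hx
    rw [Int.le_floor] at hp2 hq2 hm2 hn2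
    have hp1' : (1:ℝ) ≤ p := by exact_mod_cast hp1
    have hq1' : (1:ℝ) ≤ q := by exact_mod_cast hq1
    have hn1' : (1:ℝ) ≤ n := by exact_mod_cast ha.trans hn1
    have hm1' : (1:ℝ) ≤ m := by exact_mod_cast ha.trans hm1
    have hlt' : (n:ℝ) < m := by exact_mod_cast hlt
    rw [Nat.cast_natAbs]
    simp only [phase]
    push_cast
    rw [abs_mul, abs_of_nonneg (by positivity : (0:ℝ) ≤ 8 * q * p ^ 3), abs_sub_comm,
      abs_of_nonneg (sub_nonneg.mpr (pow_le_pow_left₀ (by linarith) hlt'.le 8))]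
    calc 8 * (q:ℝ) * p ^ 3 * ((m:ℝ) ^ 8 - n ^ 8) ≤ 8 * (2 * P) * P ^ 3 * (M * R) ^ 8 := by
          have : (m:ℝ) ^ 8 - n ^ 8 ≤ (M * R) ^ 8 := by
            have h1 : (m:ℝ) ^ 8 ≤ (M * R) ^ 8 := pow_le_pow_left₀ (by linarith) hm2 8
            have h2 : (0:ℝ) ≤ (n:ℝ) ^ 8 := by positivity
            linarith
          have hnn : (0:ℝ) ≤ (m:ℝ) ^ 8 - n ^ 8 :=
            sub_nonneg.mpr (pow_le_pow_left₀ (by linarith) hlt'.le 8)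
          have hp3 : (p:ℝ) ≤ P := hp2.trans hHP
          gcongr
      _ ≤ 8 * (2 * P) * P ^ 3 * P ^ 3 := by gcongr
      _ = 2 ^ 4 * P ^ 7 := by ring
      _ ≤ P ^ 4 * P ^ 7 := by gcongr
      _ = P ^ 11 := by ring
  have hfib : ∀ x ∈ S, ((S.filter fun y => phase y = phase x).card : ℝ) ≤
      C ^ 4 * P ^ (ε / 2) := by
    intro x hx
    have h1 := fiber ha hx
    have h2 := hdiv (phase x).natAbs (by simpa using phase_ne ha hx)
    calc ((S.filter fun y => phase y = phase x).card : ℝ)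
        ≤ ((phase x).natAbs.divisors.card : ℝ) ^ 4 := by exact_mod_cast h1
      _ ≤ (C * (P ^ 11) ^ (ε / 88)) ^ 4 := by
        refine pow_le_pow_left₀ (by positivity) (h2.trans ?_) 4
        have := hphase x hx
        gcongr
      _ = C ^ 4 * P ^ (ε / 2) := by
        rw [mul_pow, ← Real.rpow_natCast P, ← Real.rpow_mul hP0.le,
          ← Real.rpow_natCast (P ^ _) 4, ← Real.rpow_mul hP0.le]
        congr 2
        push_cast
        ring
  have hcI : ∀ (a : ℤ) (y : ℝ), 1 ≤ a → 0 ≤ y → ((Finset.Icc a ⌊y⌋).card : ℝ) ≤ y := by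
    intro a y ha hy
    rw [Int.card_Icc]
    have h0 : 0 ≤ ⌊y⌋ := Int.floor_nonneg.mpr hy
    have h1 : (((⌊y⌋ + 1 - a).toNat : ℤ)) ≤ ⌊y⌋ := by omega
    have h2 : (((⌊y⌋ + 1 - a).toNat : ℤ) : ℝ) ≤ (⌊y⌋ : ℝ) := by exact_mod_cast h1
    exact_mod_cast h2.trans (Int.floor_le y)
  have hcard : (S.card : ℝ) ≤ H * (2 * P * (M * R * (M * R))) := by
    calc (S.card : ℝ) ≤ ((Finset.Icc 1 ⌊H⌋ ×ˢ Finset.Icc 1 ⌊2 * P⌋ ×ˢ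
          Finset.Icc (⌊M⌋ + 1) ⌊M * R⌋ ×ˢ Finset.Icc (⌊M⌋ + 1) ⌊M * R⌋).card : ℝ) := by
          exact_mod_cast Finset.card_filter_le _ _
      _ ≤ _ := by
        simp only [Finset.card_product]
        push_cast
        have h1 := hcI 1 H le_rfl hH0.le
        have h2 := hcI 1 (2 * P) le_rfl (by positivity)
        have h3 := hcI (⌊M⌋ + 1) (M * R) ha (by positivity)
        gcongr
  calc ∑ x ∈ S, ((S.filter fun y => phase y = phase x).card : ℝ)
      ≤ ∑ x ∈ S, C ^ 4 * P ^ (ε / 2) := Finset.sum_le_sum hfib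
    _ = S.card * (C ^ 4 * P ^ (ε / 2)) := by rw [Finset.sum_const, nsmul_eq_mul]
    _ ≤ H * (2 * P * (M * R * (M * R))) * (C ^ 4 * P ^ (ε / 2)) := by gcongr
    _ ≤ H * (2 * P * (M * P ^ (ε / 4) * (M * P ^ (ε / 4)))) * (C ^ 4 * P ^ (ε / 2)) := by gcongr
    _ = 2 * C ^ 4 * (P * (P ^ (ε / 4) * P ^ (ε / 4) * P ^ (ε / 2))) * H * M ^ 2 := by ring
    _ = 2 * C ^ 4 * P ^ (1 + ε) * H * M ^ 2 := by
      rw [← Real.rpow_add hP0, ← Real.rpow_add hP0, Real.rpow_add hP0 1 ε, Real.rpow_one]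
      congr 5
      ring
end

section
/- Let s ≥ 32 and let (a_{ij}) ∈ ℤ^{3×s} be propitious. Then for every ε > 0 there is a constant C > 0 such that 𝔄(q) ≤ C·q^{ε − 5/3} for all q ∈ ℕ. Consequently the singular series 𝔖 = Σ_{q=1}^∞ 𝔄(q) converges absolutely and satisfies |𝔖 − Σ_{1 ≤ q ≤ X} 𝔄(q)| ≤ C′·X^{−1/2} for all X ≥ 1 and some constant C′; and if in addition the system Σ_{j=1}^s a_{ij}x_j⁴ = 0 (1 ≤ i ≤ 3) has a non-singular solution in ℚ_p^s for every prime p, then 𝔖 > 0. -/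
open MeasureTheory Filter
open scoped Classical

/-- A `3 × m` integer matrix is highly non-singular if `m ≥ 3` and every three of its
columns are linearly independent. -/
def HighlyNonSingular {m : ℕ} (A : Matrix (Fin 3) (Fin m) ℤ) : Prop :=
  3 ≤ m ∧ ∀ j₁ j₂ j₃ : Fin m, j₁ ≠ j₂ → j₁ ≠ j₃ → j₂ ≠ j₃ →
    LinearIndependent ℚ
      ![(fun i => (A i j₁ : ℚ)), (fun i => (A i j₂ : ℚ)), (fun i => (A i j₃ : ℚ))]

/-- A `3 × s` integer matrix is propitious if `s ≥ 32` and it has block structure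
`(A₀, …, A₇, B)` in which each `Aₗ ∈ ℤ^{3×4}` is highly non-singular. -/
def Propitious {s : ℕ} (A : Matrix (Fin 3) (Fin s) ℤ) : Prop :=
  ∃ _h : 32 ≤ s, ∀ l : Fin 8,
    HighlyNonSingular (Matrix.of fun i (k : Fin 4) =>
      A i ⟨4 * l.val + k.val, by have h1 := l.isLt; have h2 := k.isLt; omega⟩)

/-- `x` is a non-singular solution (over a field `K`) of the system
`∑ⱼ aᵢⱼ xⱼ⁴ = 0 (1 ≤ i ≤ 3)` if it solves the system and the Jacobian matrix
`(aᵢⱼ xⱼ³)` has rank `3`. -/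
def NonsingularSol {s : ℕ} (A : Matrix (Fin 3) (Fin s) ℤ) {K : Type*} [Field K]
    (x : Fin s → K) : Prop :=
  (∀ i, ∑ j, (A i j : K) * x j ^ 4 = 0) ∧
    (Matrix.of fun i j => (A i j : K) * x j ^ 3).rank = 3

/-- The quartic Gauss sum `S(q,a) = ∑_{r=1}^q e(a r⁴ / q)`. -/
noncomputable def Squartic (q : ℕ) (a : ℤ) : ℂ :=
  ∑ r ∈ Finset.Icc 1 q, eC ((a : ℝ) * (r : ℝ) ^ 4 / (q : ℝ))

/-- `T(q,c) = q^{−s} ∏_{j=1}^s S(q, Λ_j(c))`, where `Λ_j(c) = ∑_{i=1}^3 a_{ij} c_i`. -/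
noncomputable def TBW {s : ℕ} (A : Matrix (Fin 3) (Fin s) ℤ) (q : ℕ)
    (c : Fin 3 → ℕ) : ℂ :=
  (q : ℂ) ^ (-(s : ℤ)) * ∏ j, Squartic q (∑ i, A i j * (c i : ℤ))

/-- `𝔄(q) = ∑_{1 ≤ c ≤ q, gcd(q,c₁,c₂,c₃)=1} T(q,c)`. -/
noncomputable def ABW {s : ℕ} (A : Matrix (Fin 3) (Fin s) ℤ) (q : ℕ) : ℂ :=
  ∑ c ∈ Fintype.piFinset (fun _ : Fin 3 => Finset.Icc 1 q),
    if Nat.gcd q (Nat.gcd (c 0) (Nat.gcd (c 1) (c 2))) = 1 then TBW A q c else 0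

lemma sum_Icc_eq_range {M : Type*} [AddCommGroup M] (f : ℕ → M) (q : ℕ) (h : f q = f 0) :
    ∑ r ∈ Finset.Icc 1 q, f r = ∑ r ∈ Finset.range q, f r := by
  have h1 := Finset.sum_range_succ f q
  have h2 := Finset.sum_range_succ' f q
  have h3 : ∑ r ∈ Finset.Icc 1 q, f r = ∑ r ∈ Finset.range q, f (r + 1) := by
    rw [Finset.range_eq_Ico, Finset.sum_Ico_add' f 0 q 1]
    rfl
  rw [h3]
  rw [h1, h] at h2
  exact (add_right_cancel h2).symm

lemma sum_range_eq_zmod {M : Type*} [AddCommMonoid M] (q : ℕ) [NeZero q] (f : ZMod q → M) :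
    ∑ r ∈ Finset.range q, f (r : ZMod q) = ∑ r : ZMod q, f r := by
  refine Finset.sum_bij (fun r _ => (r : ZMod q)) (fun _ _ => Finset.mem_univ _) ?_ ?_ ?_
  · intro a ha b hb hab
    rw [Finset.mem_range] at ha hb
    have := congrArg ZMod.val hab
    rwa [ZMod.val_natCast_of_lt ha, ZMod.val_natCast_of_lt hb] at this
  · intro b _
    exact ⟨b.val, Finset.mem_range.2 (ZMod.val_lt b), ZMod.natCast_zmod_val b⟩
  · intros; rfl

lemma sum_Icc_eq_zmod {M : Type*} [AddCommGroup M] (q : ℕ) [NeZero q] (f : ZMod q → M) :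
    ∑ r ∈ Finset.Icc 1 q, f (r : ZMod q) = ∑ r : ZMod q, f r := by
  rw [sum_Icc_eq_range (fun r : ℕ => f (r : ZMod q)) q (by simp), sum_range_eq_zmod]

lemma sum_pi_Icc_eq_zmod {M : Type*} [AddCommMonoid M] (q : ℕ) [NeZero q]
    (f : (Fin 3 → ZMod q) → M) :
    ∑ c ∈ Fintype.piFinset (fun _ : Fin 3 => Finset.Icc 1 q), f (fun i => (c i : ZMod q)) =
      ∑ c : Fin 3 → ZMod q, f c := by
  have key : ∀ a ∈ Finset.Icc 1 q, ∀ b ∈ Finset.Icc 1 q, (a : ZMod q) = b → a = b := by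
    intro a ha b hb hab
    rw [Finset.mem_Icc] at ha hb
    rw [ZMod.natCast_eq_natCast_iff] at hab
    have h1 : a - 1 + 1 = a := by omega
    have h2 : b - 1 + 1 = b := by omega
    rw [← h1, ← h2] at hab
    have := Nat.ModEq.add_right_cancel' 1 hab
    have h3 := Nat.ModEq.eq_of_lt_of_lt this (by omega) (by omega)
    omega
  refine Finset.sum_bij (fun c _ => (fun i => (c i : ZMod q))) (fun _ _ => Finset.mem_univ _) ?_ ?_ ?_
  · intro a ha b hb hab
    rw [Fintype.mem_piFinset] at ha hb
    funext i
    exact key _ (ha i) _ (hb i) (congrFun hab i)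
  · intro b _
    refine ⟨fun i => if b i = 0 then q else (b i).val, ?_, ?_⟩
    · rw [Fintype.mem_piFinset]
      intro i
      rw [Finset.mem_Icc]
      split_ifs with h
      · exact ⟨Nat.pos_of_ne_zero (NeZero.ne q), le_rfl⟩
      · refine ⟨Nat.pos_of_ne_zero ?_, (ZMod.val_lt _).le⟩
        rwa [Ne, ZMod.val_eq_zero]
    · funext i
      dsimp only
      split_ifs with h
      · simp [h]
      · simp
  · intros; rfl

lemma eC_zmod (q : ℕ) [NeZero q] (a : ℤ) (r : ℕ) :
    eC ((a : ℝ) * (r : ℝ) ^ 4 / (q : ℝ)) =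
      ZMod.stdAddChar ((a : ZMod q) * (r : ZMod q) ^ 4) := by
  have : ((a : ZMod q) * (r : ZMod q) ^ 4) = ((a * (r : ℤ) ^ 4 : ℤ) : ZMod q) := by push_cast; rfl
  rw [this, ZMod.stdAddChar_coe, eC]
  congr 1
  push_cast
  ring

/-- The quartic Gauss sum on `ZMod q`. -/
noncomputable def GZ (q : ℕ) [NeZero q] (a : ZMod q) : ℂ :=
  ∑ r : ZMod q, ZMod.stdAddChar (a * r ^ 4)

lemma Squartic_eq_GZ (q : ℕ) [NeZero q] (a : ℤ) : Squartic q a = GZ q (a : ZMod q) := by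
  unfold Squartic GZ
  rw [← sum_Icc_eq_zmod q]
  exact Finset.sum_congr rfl fun r _ => eC_zmod q a r

lemma norm_stdAddChar (q : ℕ) [NeZero q] (x : ZMod q) : ‖(ZMod.stdAddChar x : ℂ)‖ = 1 := by
  exact AddChar.norm_apply _ _

lemma norm_GZ_le (q : ℕ) [NeZero q] (a : ZMod q) : ‖GZ q a‖ ≤ q := by
  unfold GZ
  refine (norm_sum_le _ _).trans ?_
  simp [norm_stdAddChar, ZMod.card]

lemma sum_range_mul_periodic {M : Type*} [AddCommMonoid M] (d : ℕ) (f : ℕ → M)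
    (hf : ∀ r, f (r + d) = f r) (g : ℕ) :
    ∑ r ∈ Finset.range (g * d), f r = g • ∑ r ∈ Finset.range d, f r := by
  induction g with
  | zero => simp
  | succ g ih =>
    have : ∀ k r, f (k * d + r) = f r := by
      intro k r
      induction k with
      | zero => simp
      | succ k ihk => rw [← ihk, ← hf (k * d + r)]; congr 1; ring
    rw [Nat.succ_mul, Finset.sum_range_add, ih, Finset.sum_congr rfl (fun r _ => this g r), succ_nsmul]

lemma Squartic_eq_range (q : ℕ) (a : ℤ) :
    Squartic q a = ∑ r ∈ Finset.range q, eC ((a : ℝ) * (r : ℝ) ^ 4 / (q : ℝ)) := by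
  rcases Nat.eq_zero_or_pos q with rfl | h
  · simp [Squartic]
  haveI : NeZero q := ⟨h.ne'⟩
  exact sum_Icc_eq_range (fun r : ℕ => eC ((a : ℝ) * (r : ℝ) ^ 4 / (q : ℝ))) q
    (by rw [eC_zmod, eC_zmod]; simp)

lemma eC_periodic (d : ℕ) (hd : 0 < d) (a : ℤ) (r : ℕ) :
    eC ((a : ℝ) * ((r + d : ℕ) : ℝ) ^ 4 / (d : ℝ)) = eC ((a : ℝ) * (r : ℝ) ^ 4 / (d : ℝ)) := by
  haveI : NeZero d := ⟨hd.ne'⟩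
  rw [eC_zmod, eC_zmod]; simp

lemma Squartic_scale (g d : ℕ) (hg : 0 < g) (hd : 0 < d) (a : ℤ) :
    Squartic (g * d) (g * a) = g * Squartic d a := by
  rw [Squartic_eq_range, Squartic_eq_range]
  have hg' : (g : ℝ) ≠ 0 := by positivity
  have : ∀ r : ℕ, eC ((((g : ℤ) * a : ℤ) : ℝ) * (r : ℝ) ^ 4 / ((g * d : ℕ) : ℝ)) =
      eC ((a : ℝ) * (r : ℝ) ^ 4 / (d : ℝ)) := by
    intro r
    congr 1
    push_cast
    rw [mul_assoc, mul_div_mul_left _ _ hg']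
  simp_rw [this]
  rw [sum_range_mul_periodic d (fun r : ℕ => eC ((a : ℝ) * (r : ℝ) ^ 4 / (d : ℝ)))
    (eC_periodic d hd a) g, nsmul_eq_mul]

lemma TBW_scale {s : ℕ} (A : Matrix (Fin 3) (Fin s) ℤ) (g d : ℕ) (hg : 0 < g) (hd : 0 < d)
    (c : Fin 3 → ℕ) : TBW A (g * d) (fun i => g * c i) = TBW A d c := by
  unfold TBW
  have h1 : ∀ j, Squartic (g * d) (∑ i, A i j * ((g * c i : ℕ) : ℤ)) =
      g * Squartic d (∑ i, A i j * (c i : ℤ)) := by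
    intro j
    rw [← Squartic_scale g d hg hd]
    congr 1
    rw [Finset.mul_sum]
    refine Finset.sum_congr rfl fun i _ => ?_
    push_cast; ring
  simp_rw [h1]
  rw [Finset.prod_mul_distrib]
  have hg' : (g : ℂ) ≠ 0 := by exact_mod_cast hg.ne'
  simp only [Finset.prod_const, Finset.card_univ, Fintype.card_fin]
  push_cast
  rw [mul_zpow, ← zpow_natCast (g : ℂ) s]
  have : (g : ℂ) ^ (-(s : ℤ)) * (g : ℂ) ^ (s : ℤ) = 1 := by
    rw [← zpow_add₀ hg']; simp
  linear_combination ((d : ℂ) ^ (-(s : ℤ)) * ∏ j, Squartic d (∑ i, A i j * (c i : ℤ))) * this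

/-- the gcd of three numbers with `q`. -/
def gq (q : ℕ) (c : Fin 3 → ℕ) : ℕ := Nat.gcd q (Nat.gcd (c 0) (Nat.gcd (c 1) (c 2)))

lemma gq_dvd (q : ℕ) (c : Fin 3 → ℕ) (i : Fin 3) : gq q c ∣ c i := by
  have h0 := Nat.gcd_dvd_right q (Nat.gcd (c 0) (Nat.gcd (c 1) (c 2)))
  have h1 := h0.trans (Nat.gcd_dvd_right (c 0) (Nat.gcd (c 1) (c 2)))
  fin_cases i
  · exact h0.trans (Nat.gcd_dvd_left _ _)
  · exact h1.trans (Nat.gcd_dvd_left _ _)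
  · exact h1.trans (Nat.gcd_dvd_right _ _)

lemma gq_mul (g d : ℕ) (c : Fin 3 → ℕ) : gq (g * d) (fun i => g * c i) = g * gq d c := by
  simp only [gq, Nat.gcd_mul_left]

lemma sum_TBW_eq {s : ℕ} (A : Matrix (Fin 3) (Fin s) ℤ) (q : ℕ) (hq : 0 < q) :
    ∑ c ∈ Fintype.piFinset (fun _ : Fin 3 => Finset.Icc 1 q), TBW A q c =
      ∑ d ∈ q.divisors, ABW A d := by
  rw [← Finset.sum_fiberwise_of_maps_to (s := Fintype.piFinset (fun _ : Fin 3 => Finset.Icc 1 q))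
    (t := q.divisors) (g := fun c => q / gq q c)
    (fun c _ => Nat.mem_divisors.2 ⟨Nat.div_dvd_of_dvd (Nat.gcd_dvd_left _ _), hq.ne'⟩)]
  refine Finset.sum_congr rfl fun d hd => ?_
  obtain ⟨⟨g, hg⟩, -⟩ := Nat.mem_divisors.1 hd
  rw [mul_comm] at hg
  subst hg
  have hg : 0 < g := Nat.pos_of_ne_zero (by rintro rfl; simp at hq)
  have hd : 0 < d := Nat.pos_of_ne_zero (by rintro rfl; simp at hq)
  unfold ABW
  rw [← Finset.sum_filter]
  symm
  refine Finset.sum_bij (fun c _ => fun i => g * c i) ?_ ?_ ?_ ?_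
  · intro c hc
    rw [Finset.mem_filter, Fintype.mem_piFinset] at hc ⊢
    refine ⟨fun i => ?_, ?_⟩
    · have := Finset.mem_Icc.1 (hc.1 i)
      exact Finset.mem_Icc.2 ⟨Nat.mul_pos hg this.1, Nat.mul_le_mul_left _ this.2⟩
    · have h2 : gq d c = 1 := hc.2
      rw [gq_mul, h2, mul_one, Nat.mul_div_cancel_left _ hg]
  · intro c _ c' _ h
    funext i
    exact Nat.eq_of_mul_eq_mul_left hg (congrFun h i)
  · intro c hc
    rw [Finset.mem_filter, Fintype.mem_piFinset] at hc
    have hgq : gq (g * d) c = g := by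
      have h1 := hc.2
      have h2 : gq (g * d) c ∣ g * d := Nat.gcd_dvd_left _ _
      have h3 := Nat.div_mul_cancel h2
      rw [h1, mul_comm] at h3
      exact Nat.eq_of_mul_eq_mul_right hd h3
    have hdv : ∀ i, c i = g * (c i / g) := fun i =>
      (Nat.mul_div_cancel' (hgq ▸ gq_dvd (g * d) c i)).symm
    refine ⟨fun i => c i / g, ?_, ?_⟩
    · rw [Finset.mem_filter, Fintype.mem_piFinset]
      refine ⟨fun i => ?_, ?_⟩
      · have := Finset.mem_Icc.1 (hc.1 i)
        rw [Finset.mem_Icc]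
        refine ⟨?_, ?_⟩
        · refine Nat.pos_of_ne_zero fun h0 => ?_
          rw [hdv i, h0] at this; simp at this
        · refine Nat.le_of_mul_le_mul_left ?_ hg
          rw [← hdv i]; exact this.2
      · have : gq (g * d) (fun i => g * (c i / g)) = g := by
          have h4 : (fun i => g * (c i / g)) = c := funext fun i => (hdv i).symm
          rw [h4, hgq]
        rw [gq_mul] at this
        exact Nat.eq_of_mul_eq_mul_left hg (by rw [mul_one]; exact this)
    · funext i; exact (hdv i).symm
  · intro c _
    exact (TBW_scale A g d hg hd c).symm

/-- Number of solutions of the system modulo `q`. -/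
noncomputable def MBW {s : ℕ} (A : Matrix (Fin 3) (Fin s) ℤ) (q : ℕ) : ℕ :=
  Nat.card {x : Fin s → ZMod q // ∀ i, ∑ j, (A i j : ZMod q) * x j ^ 4 = 0}

lemma addChar_sum {G ι : Type*} [AddCommMonoid G] (ψ : AddChar G ℂ) (t : Finset ι) (f : ι → G) :
    ψ (∑ i ∈ t, f i) = ∏ i ∈ t, ψ (f i) := by
  induction t using Finset.induction_on with
  | empty => simp
  | insert a t ha ih => rw [Finset.sum_insert ha, Finset.prod_insert ha, AddChar.map_add_eq_mul, ih]

lemma prod_GZ_eq {s : ℕ} (A : Matrix (Fin 3) (Fin s) ℤ) (q : ℕ) [NeZero q]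
    (c : Fin 3 → ZMod q) :
    ∏ j, GZ q (∑ i, (A i j : ZMod q) * c i) =
      ∑ x : Fin s → ZMod q, ∏ i, ZMod.stdAddChar (c i * ∑ j, (A i j : ZMod q) * x j ^ 4) := by
  unfold GZ
  rw [Finset.prod_univ_sum, Fintype.piFinset_univ]
  refine Finset.sum_congr rfl fun x _ => ?_
  rw [← addChar_sum, ← addChar_sum]
  congr 1
  simp_rw [Finset.sum_mul, Finset.mul_sum]
  rw [Finset.sum_comm]
  refine Finset.sum_congr rfl fun i _ => Finset.sum_congr rfl fun j _ => by ring

lemma sum_prod_GZ {s : ℕ} (A : Matrix (Fin 3) (Fin s) ℤ) (q : ℕ) [NeZero q] :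
    ∑ c : Fin 3 → ZMod q, ∏ j, GZ q (∑ i, (A i j : ZMod q) * c i) = (q : ℂ) ^ 3 * MBW A q := by
  simp_rw [prod_GZ_eq]
  rw [Finset.sum_comm]
  have h1 : ∀ x : Fin s → ZMod q,
      ∑ c : Fin 3 → ZMod q, ∏ i, ((ZMod.stdAddChar (c i * ∑ j, (A i j : ZMod q) * x j ^ 4)) : ℂ) =
        if ∀ i, ∑ j, (A i j : ZMod q) * x j ^ 4 = 0 then (q : ℂ) ^ 3 else 0 := by
    intro x
    have h2 := Finset.prod_univ_sum (fun _ : Fin 3 => (Finset.univ : Finset (ZMod q)))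
      (fun i c => ((ZMod.stdAddChar (c * ∑ j, (A i j : ZMod q) * x j ^ 4)) : ℂ))
    rw [Fintype.piFinset_univ] at h2
    rw [← h2]
    simp_rw [AddChar.sum_mulShift _ (ZMod.isPrimitive_stdAddChar q), ZMod.card]
    split_ifs with h
    · simp [h]
    · push Not at h
      obtain ⟨i, hi⟩ := h
      exact Finset.prod_eq_zero (Finset.mem_univ i) (by simp [hi])
  simp_rw [h1]
  rw [← Finset.sum_filter, Finset.sum_const, nsmul_eq_mul, mul_comm, MBW, Nat.card_eq_fintype_card,
    Fintype.card_subtype]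

lemma sum_TBW_eq_MBW {s : ℕ} (A : Matrix (Fin 3) (Fin s) ℤ) (q : ℕ) [NeZero q] :
    ∑ c ∈ Fintype.piFinset (fun _ : Fin 3 => Finset.Icc 1 q), TBW A q c =
      (q : ℂ) ^ (-(s : ℤ)) * ((q : ℂ) ^ 3 * MBW A q) := by
  rw [← sum_prod_GZ, ← sum_pi_Icc_eq_zmod q, Finset.mul_sum]
  refine Finset.sum_congr rfl fun c _ => ?_
  unfold TBW
  congr 1
  refine Finset.prod_congr rfl fun j _ => ?_
  rw [Squartic_eq_GZ]
  push_cast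
  rfl

lemma MBW_one {s : ℕ} (A : Matrix (Fin 3) (Fin s) ℤ) : MBW A 1 = 1 := by
  unfold MBW
  rw [Nat.card_eq_one_iff_unique]
  refine ⟨⟨fun x y => Subtype.ext (Subsingleton.elim (α := Fin s → Fin 1) _ _)⟩, ⟨⟨0, fun i => ?_⟩⟩⟩
  exact Subsingleton.elim (α := Fin 1) _ _

lemma MBW_mul {s : ℕ} (A : Matrix (Fin 3) (Fin s) ℤ) (m n : ℕ) (h : m.Coprime n) :
    MBW A (m * n) = MBW A m * MBW A n := by
  unfold MBW
  rw [← Nat.card_prod]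
  let e := ZMod.chineseRemainder h
  have key : ∀ (x : Fin s → ZMod (m * n)) (i : Fin 3),
      e (∑ j, (A i j : ZMod (m * n)) * x j ^ 4) =
      (∑ j, (A i j : ZMod m) * (e (x j)).1 ^ 4, ∑ j, (A i j : ZMod n) * (e (x j)).2 ^ 4) := by
    intro x i
    rw [map_sum]
    ext
    · simp [Prod.fst_sum]
    · simp [Prod.snd_sum]
  refine Nat.card_congr ⟨fun x => (⟨fun j => (e (x.1 j)).1, fun i => ?_⟩,
    ⟨fun j => (e (x.1 j)).2, fun i => ?_⟩), fun y => ⟨fun j => e.symm (y.1.1 j, y.2.1 j),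
      fun i => ?_⟩, ?_, ?_⟩
  · have := key x.1 i
    rw [x.2 i, map_zero] at this
    exact (congrArg Prod.fst this).symm
  · have := key x.1 i
    rw [x.2 i, map_zero] at this
    exact (congrArg Prod.snd this).symm
  · apply e.injective
    rw [key, map_zero]
    simp [y.1.2 i, y.2.2 i]
  · intro x
    ext j
    simp
  · intro y
    simp

/-- `𝔄` as an arithmetic function. -/
noncomputable def fA {s : ℕ} (A : Matrix (Fin 3) (Fin s) ℤ) : ArithmeticFunction ℂ :=
  ⟨ABW A, by simp [ABW]⟩

/-- Normalised solution count as an arithmetic function. -/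
noncomputable def NA {s : ℕ} (A : Matrix (Fin 3) (Fin s) ℤ) : ArithmeticFunction ℂ :=
  ⟨fun q => (q : ℂ) ^ (-(s : ℤ)) * ((q : ℂ) ^ 3 * MBW A q), by simp⟩

lemma fA_zeta {s : ℕ} (A : Matrix (Fin 3) (Fin s) ℤ) :
    fA A * (ArithmeticFunction.zeta : ArithmeticFunction ℂ) = NA A := by
  ext q
  rw [ArithmeticFunction.coe_mul_zeta_apply]
  rcases Nat.eq_zero_or_pos q with rfl | hq
  · simp
  · have : NeZero q := ⟨hq.ne'⟩
    exact (sum_TBW_eq A q hq).symm.trans (sum_TBW_eq_MBW A q)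

lemma NA_mult {s : ℕ} (A : Matrix (Fin 3) (Fin s) ℤ) : (NA A).IsMultiplicative := by
  constructor
  · simp [NA, MBW_one]
  · intro m n h
    simp only [NA, ArithmeticFunction.coe_mk, MBW_mul A m n h]
    push_cast
    rw [mul_zpow, mul_pow]
    ring

lemma fA_mult {s : ℕ} (A : Matrix (Fin 3) (Fin s) ℤ) : (fA A).IsMultiplicative := by
  have : fA A = NA A * (ArithmeticFunction.moebius : ArithmeticFunction ℂ) := by
    rw [← fA_zeta, mul_assoc, ArithmeticFunction.coe_zeta_mul_coe_moebius, mul_one]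
  rw [this]
  exact (NA_mult A).mul ArithmeticFunction.isMultiplicative_moebius.intCast

lemma sum_ABW_prime_pow {s : ℕ} (A : Matrix (Fin 3) (Fin s) ℤ) (p : ℕ) (hp : p.Prime) (h : ℕ) :
    ∑ k ∈ Finset.range (h + 1), ABW A (p ^ k) =
      ((p ^ h : ℕ) : ℂ) ^ (-(s : ℤ)) * (((p ^ h : ℕ) : ℂ) ^ 3 * MBW A (p ^ h)) := by
  have : NeZero (p ^ h) := ⟨(pow_pos hp.pos h).ne'⟩
  rw [← sum_TBW_eq_MBW, sum_TBW_eq A _ (pow_pos hp.pos h), Nat.sum_divisors_prime_pow hp]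

lemma GZ_vanish (p h P u q : ℕ) (hq : q = p ^ (h + 1)) (hp : p.Prime) [NeZero q] (hu : ¬ p ∣ u)
    (h4 : 4 * P = u * p ^ h) (h6 : q ∣ 6 * P ^ 2) (h3 : q ∣ 4 * P ^ 3)
    (h1 : q ∣ P ^ 4) (a : ℤ) (ha : ¬ (p : ℤ) ∣ a) :
    GZ q (a : ZMod q) =
      ∑ r : ZMod q, if p ∣ r.val then ZMod.stdAddChar ((a : ZMod q) * r ^ 4)
        else 0 := by
  have c6 : (6 : ZMod q) * (P : ZMod q) ^ 2 = 0 := by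
    have := (ZMod.natCast_eq_zero_iff (6 * P ^ 2) q).2 h6
    push_cast at this; exact this
  have c3 : (4 : ZMod q) * (P : ZMod q) ^ 3 = 0 := by
    have := (ZMod.natCast_eq_zero_iff (4 * P ^ 3) q).2 h3
    push_cast at this; exact this
  have c1 : (P : ZMod q) ^ 4 = 0 := by
    have := (ZMod.natCast_eq_zero_iff (P ^ 4) q).2 h1
    push_cast at this; exact this
  have c4 : (4 : ZMod q) * P = (u : ZMod q) * (p : ZMod q) ^ h := by
    have := congrArg (Nat.cast : ℕ → ZMod q) h4
    push_cast at this; exact this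
  have cp : (p : ZMod q) ^ (h + 1) = 0 := by
    have := (ZMod.natCast_eq_zero_iff (p ^ (h + 1)) q).2 hq.dvd
    push_cast at this; exact this
  have shift : ∀ t : ℕ, GZ q (a : ZMod q) =
      ∑ r : ZMod q, (ZMod.stdAddChar ((a : ZMod q) * r ^ 4) : ℂ) *
        (ZMod.stdAddChar ((a : ZMod q) * ((u : ZMod q) * (p : ZMod q) ^ h) * r ^ 3) : ℂ) ^ t := by
    intro t
    unfold GZ
    rw [← Equiv.sum_comp (Equiv.addRight ((t : ZMod q) * P))]
    refine Finset.sum_congr rfl fun r _ => ?_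
    rw [← AddChar.map_nsmul_eq_pow, ← AddChar.map_add_eq_mul]
    congr 1
    rw [Equiv.coe_addRight, nsmul_eq_mul, ← c4]
    linear_combination (a : ZMod q) * r ^ 2 * t ^ 2 * c6 + (a : ZMod q) * r * t ^ 3 * c3 +
      (a : ZMod q) * t ^ 4 * c1
  have hp0 : (p : ℂ) ≠ 0 := by exact_mod_cast hp.ne_zero
  apply mul_left_cancel₀ hp0
  have e1 : (p : ℂ) * GZ q (a : ZMod q) = ∑ t ∈ Finset.range p, GZ q (a : ZMod q) := by
    simp
  rw [e1, Finset.sum_congr rfl (fun t _ => shift t), Finset.sum_comm, Finset.mul_sum]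
  refine Finset.sum_congr rfl fun r _ => ?_
  rw [← Finset.mul_sum]
  split_ifs with hr
  · have hz : (a : ZMod q) * ((u : ZMod q) * (p : ZMod q) ^ h) * r ^ 3 = 0 := by
      obtain ⟨k, hk⟩ := hr
      have hr' : r = (p : ZMod q) * k := by
        rw [← ZMod.natCast_zmod_val r, hk]; push_cast; rfl
      rw [hr']
      linear_combination (a : ZMod q) * u * (p : ZMod q) ^ 2 * k ^ 3 * cp
    rw [hz]
    simp [mul_comm]
  · have hz : (a : ZMod q) * ((u : ZMod q) * (p : ZMod q) ^ h) * r ^ 3 ≠ 0 := by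
      intro hz
      have : (a : ZMod q) * ((u : ZMod q) * (p : ZMod q) ^ h) * r ^ 3 =
          ((a * (u * (p : ℤ) ^ h) * (r.val : ℤ) ^ 3 : ℤ) : ZMod q) := by
        push_cast
        rw [ZMod.natCast_zmod_val r]
      rw [this, ZMod.intCast_zmod_eq_zero_iff_dvd] at hz
      have hz2 : (p : ℤ) ^ h * p ∣ (p : ℤ) ^ h * (a * u * (r.val : ℤ) ^ 3) := by
        have hqZ : (q : ℤ) = (p : ℤ) ^ (h + 1) := by rw [hq]; push_cast; rfl
        rw [hqZ] at hz
        rw [← pow_succ]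
        convert hz using 1
        ring
      have hz3 := Int.dvd_of_mul_dvd_mul_left (by exact pow_ne_zero _ (by exact_mod_cast hp.ne_zero)) hz2
      have hpp := Nat.prime_iff_prime_int.1 hp
      rcases hpp.dvd_or_dvd hz3 with h5 | h5
      · rcases hpp.dvd_or_dvd h5 with h5 | h5
        · exact ha h5
        · exact hu (by exact_mod_cast h5)
      · exact hr (by exact_mod_cast hpp.dvd_of_dvd_pow h5)
    have hz1 : (ZMod.stdAddChar ((a : ZMod q) * ((u : ZMod q) * (p : ZMod q) ^ h) * r ^ 3) : ℂ) ≠ 1 := by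
      intro h0
      apply hz
      apply ZMod.injective_stdAddChar
      rw [h0, AddChar.map_zero_eq_one]
    have hzp : (ZMod.stdAddChar ((a : ZMod q) * ((u : ZMod q) * (p : ZMod q) ^ h) * r ^ 3) : ℂ) ^ p = 1 := by
      rw [← AddChar.map_nsmul_eq_pow, nsmul_eq_mul]
      have : (p : ZMod q) * ((a : ZMod q) * ((u : ZMod q) * (p : ZMod q) ^ h) * r ^ 3) = 0 := by
        linear_combination (a : ZMod q) * u * r ^ 3 * cp
      rw [this, AddChar.map_zero_eq_one]
    rw [geom_sum_eq hz1, hzp]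
    simp

lemma Squartic_vanish (p h P u : ℕ) (hp : p.Prime) (hu : ¬ p ∣ u)
    (h4 : 4 * P = u * p ^ h) (h6 : p ^ (h + 1) ∣ 6 * P ^ 2) (h3 : p ^ (h + 1) ∣ 4 * P ^ 3)
    (h1 : p ^ (h + 1) ∣ P ^ 4) (a : ℤ) (ha : ¬ (p : ℤ) ∣ a) :
    Squartic (p ^ (h + 1)) a =
      ∑ r ∈ Finset.range (p ^ h), eC ((a : ℝ) * ((p * r : ℕ) : ℝ) ^ 4 / ((p ^ (h + 1) : ℕ) : ℝ)) := by
  have : NeZero (p ^ (h + 1)) := ⟨(pow_pos hp.pos _).ne'⟩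
  rw [Squartic_eq_GZ, GZ_vanish p h P u _ rfl hp hu h4 h6 h3 h1 a ha, ← sum_range_eq_zmod]
  have e : ∀ r ∈ Finset.range (p ^ (h + 1)),
      (if p ∣ (r : ZMod (p ^ (h + 1))).val then
        (ZMod.stdAddChar ((a : ZMod (p ^ (h + 1))) * (r : ZMod (p ^ (h + 1))) ^ 4) : ℂ) else 0) =
      if p ∣ r then eC ((a : ℝ) * (r : ℝ) ^ 4 / ((p ^ (h + 1) : ℕ) : ℝ)) else 0 := by
    intro r hr
    rw [ZMod.val_natCast_of_lt (Finset.mem_range.1 hr), eC_zmod]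
  rw [Finset.sum_congr rfl e, ← Finset.sum_filter]
  symm
  refine Finset.sum_bij (fun r _ => p * r) ?_ ?_ ?_ ?_
  · intro r hr
    rw [Finset.mem_range] at hr
    rw [Finset.mem_filter, Finset.mem_range]
    refine ⟨?_, dvd_mul_right _ _⟩
    rw [pow_succ, mul_comm]
    exact Nat.mul_lt_mul_of_pos_right hr hp.pos
  · intro r _ r' _ hrr
    exact Nat.eq_of_mul_eq_mul_left hp.pos hrr
  · intro r hr
    rw [Finset.mem_filter, Finset.mem_range] at hr
    obtain ⟨hr, k, rfl⟩ := hr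
    refine ⟨k, ?_, rfl⟩
    rw [Finset.mem_range]
    rw [pow_succ, mul_comm] at hr
    exact Nat.lt_of_mul_lt_mul_right hr
  · intros; rfl

lemma norm_eC (x : ℝ) : ‖eC x‖ = 1 := by
  unfold eC
  have : (2 * Real.pi * Complex.I * x : ℂ) = ((2 * Real.pi * x : ℝ) : ℂ) * Complex.I := by
    push_cast; ring
  rw [this, Complex.norm_exp_ofReal_mul_I]

lemma norm_Squartic_le (q : ℕ) (a : ℤ) : ‖Squartic q a‖ ≤ q := by
  unfold Squartic
  refine (norm_sum_le _ _).trans ?_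
  simp [norm_eC]

/-- hypotheses of the vanishing lemma hold. -/
lemma vanish_hyp (p h : ℕ) (hp : p.Prime) (hh : (p ≠ 2 ∧ 1 ≤ h) ∨ 4 ≤ h) :
    ∃ P u : ℕ, ¬ p ∣ u ∧ 4 * P = u * p ^ h ∧ p ^ (h + 1) ∣ 6 * P ^ 2 ∧ p ^ (h + 1) ∣ 4 * P ^ 3 ∧
      p ^ (h + 1) ∣ P ^ 4 := by
  by_cases h2 : p = 2
  · subst h2
    have h4 : 4 ≤ h := by simpa using hh
    obtain ⟨k, rfl⟩ := Nat.exists_eq_add_of_le h4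
    refine ⟨2 ^ (k + 2), 1, by norm_num, by ring, ?_, ?_, ?_⟩
    · exact ⟨3 * 2 ^ k, by ring⟩
    · exact ⟨2 ^ (2 * k + 3), by ring⟩
    · exact ⟨2 ^ (3 * k + 3), by ring⟩
  · have h1 : 1 ≤ h := by omega
    obtain ⟨k, rfl⟩ := Nat.exists_eq_add_of_le h1
    refine ⟨p ^ (1 + k), 4, ?_, rfl, ?_, ?_, ?_⟩
    · intro h
      exact h2 ((Nat.prime_dvd_prime_iff_eq hp Nat.prime_two).1
        (hp.dvd_of_dvd_pow (show p ∣ 2 ^ 2 from h)))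
    · exact ⟨6 * p ^ k, by ring⟩
    · exact ⟨4 * p ^ (2 * k + 1), by ring⟩
    · exact ⟨p ^ (3 * k + 2), by ring⟩

lemma Squartic_norm_small (p h : ℕ) (hp : p.Prime) (hh : (p ≠ 2 ∧ 1 ≤ h) ∨ 4 ≤ h) (a : ℤ)
    (ha : ¬ (p : ℤ) ∣ a) : ‖Squartic (p ^ (h + 1)) a‖ ≤ (p : ℝ) ^ h := by
  obtain ⟨P, u, hu, h4, h6, h3, h1⟩ := vanish_hyp p h hp hh
  rw [Squartic_vanish p h P u hp hu h4 h6 h3 h1 a ha]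
  refine (norm_sum_le _ _).trans ?_
  simp [norm_eC]

lemma Squartic_rec (p k : ℕ) (hp : p.Prime) (hh : p ≠ 2 ∨ 1 ≤ k) (a : ℤ)
    (ha : ¬ (p : ℤ) ∣ a) : Squartic (p ^ (k + 4)) a = (p : ℂ) ^ 3 * Squartic (p ^ k) a := by
  obtain ⟨P, u, hu, h4, h6, h3, h1⟩ := vanish_hyp p (k + 3) hp (by omega)
  rw [show k + 4 = k + 3 + 1 from rfl, Squartic_vanish p (k + 3) P u hp hu h4 h6 h3 h1 a ha,
    Squartic_eq_range]
  have hp0 : (p : ℝ) ≠ 0 := by exact_mod_cast hp.ne_zero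
  have : ∀ r : ℕ, eC ((a : ℝ) * ((p * r : ℕ) : ℝ) ^ 4 / ((p ^ (k + 3 + 1) : ℕ) : ℝ)) =
      eC ((a : ℝ) * (r : ℝ) ^ 4 / ((p ^ k : ℕ) : ℝ)) := by
    intro r
    congr 1
    push_cast
    field_simp
    ring
  simp_rw [this]
  have h5 := sum_range_mul_periodic (p ^ k) (fun r : ℕ => eC ((a : ℝ) * (r : ℝ) ^ 4 / ((p ^ k : ℕ) : ℝ)))
    (eC_periodic (p ^ k) (pow_pos hp.pos k) a) (p ^ 3)
  rw [← pow_add, add_comm 3 k] at h5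
  rw [h5, nsmul_eq_mul]
  push_cast
  rfl

lemma card_pow_four_le (p : ℕ) [Fact p.Prime] (b : ZMod p) :
    (Finset.univ.filter fun r : ZMod p => r ^ 4 = b).card ≤ 4 := by
  have h := Polynomial.card_nthRoots 4 b
  refine le_trans ?_ h
  refine (Finset.card_le_card (t := (Polynomial.nthRoots 4 b).toFinset) ?_).trans
    (Multiset.toFinset_card_le _)
  intro r hr
  rw [Multiset.mem_toFinset, Polynomial.mem_nthRoots (by norm_num)]
  exact (Finset.mem_filter.1 hr).2

lemma moment (p : ℕ) [Fact p.Prime] : ∑ a : ZMod p, ‖GZ p a‖ ^ 2 ≤ 4 * (p : ℝ) ^ 2 := by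
  have h1 : ∀ a : ZMod p, ((‖GZ p a‖ ^ 2 : ℝ) : ℂ) =
      ∑ r : ZMod p, ∑ t : ZMod p, (ZMod.stdAddChar (a * (r ^ 4 - t ^ 4)) : ℂ) := by
    intro a
    have : ((‖GZ p a‖ ^ 2 : ℝ) : ℂ) = GZ p a * (starRingEnd ℂ) (GZ p a) := by
      rw [Complex.mul_conj, Complex.normSq_eq_norm_sq]
    rw [this]
    unfold GZ
    rw [map_sum, Finset.sum_mul_sum]
    refine Finset.sum_congr rfl fun r _ => Finset.sum_congr rfl fun t _ => ?_
    rw [← AddChar.map_neg_eq_conj, ← AddChar.map_add_eq_mul]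
    congr 1
    ring
  have h2 : ((∑ a : ZMod p, ‖GZ p a‖ ^ 2 : ℝ) : ℂ) =
      ((∑ t : ZMod p, (p : ℝ) * (Finset.univ.filter fun r : ZMod p => r ^ 4 = t ^ 4).card : ℝ) : ℂ) := by
    have hsw : ∑ a : ZMod p, ∑ r : ZMod p, ∑ t : ZMod p,
        (ZMod.stdAddChar (a * (r ^ 4 - t ^ 4)) : ℂ) =
        ∑ t : ZMod p, ∑ r : ZMod p, ∑ a : ZMod p, (ZMod.stdAddChar (a * (r ^ 4 - t ^ 4)) : ℂ) :=
      Finset.sum_comm.trans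
        ((Finset.sum_congr rfl fun r _ => Finset.sum_comm).trans Finset.sum_comm)
    rw [Complex.ofReal_sum, Finset.sum_congr rfl (fun a _ => h1 a), hsw, Complex.ofReal_sum]
    refine Finset.sum_congr rfl fun t _ => ?_
    have hin : ∀ r : ZMod p, ∑ a : ZMod p, (ZMod.stdAddChar (a * (r ^ 4 - t ^ 4)) : ℂ) =
        if r ^ 4 = t ^ 4 then (p : ℂ) else 0 := by
      intro r
      rw [AddChar.sum_mulShift _ (ZMod.isPrimitive_stdAddChar p), ZMod.card]
      simp only [sub_eq_zero]
      split_ifs <;> simp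
    rw [Finset.sum_congr rfl (fun r _ => hin r)]
    rw [Finset.card_filter]
    push_cast
    rw [Finset.mul_sum]
    refine Finset.sum_congr rfl fun r _ => ?_
    split_ifs <;> simp
  rw [Complex.ofReal_inj] at h2
  rw [h2]
  have h3 : ∀ t ∈ (Finset.univ : Finset (ZMod p)),
      (p : ℝ) * (Finset.univ.filter fun r : ZMod p => r ^ 4 = t ^ 4).card ≤ p * 4 := by
    intro t _
    have := card_pow_four_le p (t ^ 4)
    gcongr
    exact_mod_cast this
  refine (Finset.sum_le_sum h3).trans ?_
  simp [ZMod.card]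
  nlinarith

lemma GZ_twist (p : ℕ) [Fact p.Prime] (a u : ZMod p) (hu : u ≠ 0) : GZ p (a * u ^ 4) = GZ p a := by
  unfold GZ
  rw [← Equiv.sum_comp (Equiv.mulLeft₀ u hu) (fun r => (ZMod.stdAddChar (a * r ^ 4) : ℂ))]
  refine Finset.sum_congr rfl fun r _ => ?_
  congr 1
  change a * u ^ 4 * r ^ 4 = a * (u * r) ^ 4
  ring

lemma GZ_prime (p : ℕ) [Fact p.Prime] (a : ZMod p) (ha : a ≠ 0) :
    ((p : ℝ) - 1) * ‖GZ p a‖ ^ 2 ≤ 16 * (p : ℝ) ^ 2 := by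
  have h1 : ((p : ℝ) - 1) * ‖GZ p a‖ ^ 2 =
      ∑ u ∈ (Finset.univ.erase (0 : ZMod p)), ‖GZ p (a * u ^ 4)‖ ^ 2 := by
    rw [Finset.sum_congr rfl (fun u hu => by rw [GZ_twist p a u (Finset.ne_of_mem_erase hu)]),
      Finset.sum_const, Finset.card_erase_of_mem (Finset.mem_univ _), Finset.card_univ, ZMod.card,
      nsmul_eq_mul, Nat.cast_sub (Fact.out : p.Prime).one_lt.le]
    simp
  have h2 : ∑ u ∈ (Finset.univ.erase (0 : ZMod p)), ‖GZ p (a * u ^ 4)‖ ^ 2 ≤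
      ∑ u : ZMod p, ‖GZ p (a * u ^ 4)‖ ^ 2 :=
    Finset.sum_le_sum_of_subset_of_nonneg (Finset.erase_subset _ _) (fun _ _ _ => by positivity)
  have h3 : ∑ u : ZMod p, ‖GZ p (a * u ^ 4)‖ ^ 2 ≤ ∑ b : ZMod p, 4 * ‖GZ p b‖ ^ 2 := by
    rw [← Finset.sum_fiberwise (s := (Finset.univ : Finset (ZMod p))) (g := fun u => a * u ^ 4)]
    refine Finset.sum_le_sum fun b _ => ?_
    rw [Finset.sum_congr rfl (g := fun _ => ‖GZ p b‖ ^ 2)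
      (fun u hu => by rw [(Finset.mem_filter.1 hu).2]), Finset.sum_const, nsmul_eq_mul]
    have : (Finset.univ.filter fun u : ZMod p => a * u ^ 4 = b).card ≤ 4 := by
      refine (Finset.card_le_card ?_).trans (card_pow_four_le p (a⁻¹ * b))
      intro u hu
      rw [Finset.mem_filter] at hu ⊢
      refine ⟨hu.1, ?_⟩
      rw [← hu.2, inv_mul_cancel_left₀ ha]
    gcongr
    exact_mod_cast this
  rw [← Finset.mul_sum] at h3
  have := moment p
  linarith

lemma Squartic_prime (p : ℕ) (hp : p.Prime) (hp' : 1024 ≤ p) (a : ℤ) (ha : ¬ (p : ℤ) ∣ a) :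
    ‖Squartic p a‖ ^ 4 ≤ (p : ℝ) ^ 3 := by
  have : Fact p.Prime := ⟨hp⟩
  rw [Squartic_eq_GZ]
  have h := GZ_prime p (a : ZMod p) (by rwa [Ne, ZMod.intCast_zmod_eq_zero_iff_dvd])
  have hp2 : (1024 : ℝ) ≤ p := by exact_mod_cast hp'
  set x := ‖GZ p (a : ZMod p)‖ ^ 2 with hx
  have hx0 : 0 ≤ x := by positivity
  have h2 : x ≤ 32 * p := by
    by_contra hc
    push Not at hc
    nlinarith
  calc ‖GZ p (a : ZMod p)‖ ^ 4 = x ^ 2 := by rw [hx]; ring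
    _ ≤ (32 * (p : ℝ)) ^ 2 := by gcongr
    _ = 1024 * (p : ℝ) ^ 2 := by ring
    _ ≤ p * (p : ℝ) ^ 2 := by gcongr
    _ = _ := by ring

/-- The constant in the Gauss sum bound. -/
def KG (p : ℕ) : ℕ := if p < 1024 then p ^ 4 else 1

lemma Squartic_bound_coprime (p : ℕ) (hp : p.Prime) (a : ℤ) (ha : ¬ (p : ℤ) ∣ a) (h : ℕ) :
    ‖Squartic (p ^ h) a‖ ^ 4 ≤ KG p * ((p : ℝ) ^ h) ^ 3 := by
  have hp1 : (1 : ℝ) ≤ p := by exact_mod_cast hp.one_lt.le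
  have hrec : ∀ k, (p ≠ 2 ∨ 1 ≤ k) → ‖Squartic (p ^ k) a‖ ^ 4 ≤ KG p * ((p : ℝ) ^ k) ^ 3 →
      ‖Squartic (p ^ (k + 4)) a‖ ^ 4 ≤ KG p * ((p : ℝ) ^ (k + 4)) ^ 3 := by
    intro k hk ih
    rw [Squartic_rec p k hp hk a ha, norm_mul, norm_pow, Complex.norm_natCast, mul_pow]
    calc ((p : ℝ) ^ 3) ^ 4 * ‖Squartic (p ^ k) a‖ ^ 4
        ≤ ((p : ℝ) ^ 3) ^ 4 * (KG p * ((p : ℝ) ^ k) ^ 3) := by gcongr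
      _ = _ := by ring
  have htriv : ‖Squartic (p ^ h) a‖ ≤ (p : ℝ) ^ h := by
    have := norm_Squartic_le (p ^ h) a
    push_cast at this
    exact this
  by_cases hlt : p < 1024
  · have hK : (KG p : ℝ) = (p : ℝ) ^ 4 := by simp [KG, hlt]
    induction h using Nat.strong_induction_on with
    | _ h ih =>
      by_cases h4 : h ≤ 4
      · rw [hK]
        calc ‖Squartic (p ^ h) a‖ ^ 4 ≤ ((p : ℝ) ^ h) ^ 4 := by gcongr
          _ = (p : ℝ) ^ h * ((p : ℝ) ^ h) ^ 3 := by ring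
          _ ≤ (p : ℝ) ^ 4 * ((p : ℝ) ^ h) ^ 3 := by gcongr
      · obtain ⟨k, rfl⟩ := Nat.exists_eq_add_of_le' (show 4 ≤ h by omega)
        refine hrec k (Or.inr (by omega)) (ih k (by omega) ?_)
        have := norm_Squartic_le (p ^ k) a
        push_cast at this
        exact this
  · have hK : (KG p : ℝ) = 1 := by simp [KG, hlt]
    have hp2 : p ≠ 2 := by omega
    induction h using Nat.strong_induction_on with
    | _ h ih =>
      match h, ih, htriv with
      | 0, _, htriv =>
        rw [hK]
        calc ‖Squartic (p ^ 0) a‖ ^ 4 ≤ ((p : ℝ) ^ 0) ^ 4 := by gcongr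
          _ = _ := by simp
      | 1, _, _ =>
        rw [hK, pow_one, pow_one, one_mul]
        exact Squartic_prime p hp (by omega) a ha
      | 2, _, _ =>
        have := Squartic_norm_small p 1 hp (by omega) a ha
        rw [hK]
        calc ‖Squartic (p ^ 2) a‖ ^ 4 ≤ ((p : ℝ) ^ 1) ^ 4 := by gcongr
          _ = (p : ℝ) ^ 4 := by ring
          _ ≤ (p : ℝ) ^ 6 := pow_le_pow_right₀ hp1 (by norm_num)
          _ = _ := by ring
      | 3, _, _ =>
        have := Squartic_norm_small p 2 hp (by omega) a ha
        rw [hK]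
        calc ‖Squartic (p ^ 3) a‖ ^ 4 ≤ ((p : ℝ) ^ 2) ^ 4 := by gcongr
          _ = (p : ℝ) ^ 8 := by ring
          _ ≤ (p : ℝ) ^ 9 := pow_le_pow_right₀ hp1 (by norm_num)
          _ = _ := by ring
      | k + 4, ih, _ =>
        refine hrec k (Or.inl hp2) (ih k (by omega) ?_)
        have := norm_Squartic_le (p ^ k) a
        push_cast at this
        exact this

/-- The weight `(gcd(q,a)/q)^2`. -/
noncomputable def wt (q : ℕ) (a : ℤ) : ℝ := ((Int.gcd q a : ℝ) / q) ^ 2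

lemma Squartic_bound (p : ℕ) (hp : p.Prime) (a : ℤ) (h : ℕ) :
    (‖Squartic (p ^ h) a‖ / (p ^ h : ℕ)) ^ 8 ≤ (KG p : ℝ) ^ 2 * wt (p ^ h) a := by
  set q := p ^ h with hq
  have hq0 : 0 < q := pow_pos hp.pos h
  have hK1 : 1 ≤ (KG p : ℝ) := by
    have : 1 ≤ KG p := by
      unfold KG; split_ifs
      · exact Nat.one_le_pow _ _ hp.pos
      · exact le_rfl
    exact_mod_cast this
  suffices hmain : (‖Squartic q a‖ / q) ^ 4 ≤ KG p * ((Int.gcd q a : ℝ) / q) by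
    calc (‖Squartic q a‖ / q) ^ 8 = ((‖Squartic q a‖ / q) ^ 4) ^ 2 := by ring
      _ ≤ (KG p * ((Int.gcd q a : ℝ) / q)) ^ 2 := by gcongr
      _ = _ := by unfold wt; ring
  have hgd : Int.gcd q a ∣ p ^ h := by
    have := Int.gcd_dvd_left (q : ℤ) a
    exact_mod_cast this
  obtain ⟨k, hk, hgk⟩ := (Nat.dvd_prime_pow hp).1 hgd
  obtain ⟨b, hb⟩ := Int.gcd_dvd_right (q : ℤ) a
  obtain ⟨l, rfl⟩ := Nat.exists_eq_add_of_le hk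
  have hqg : q = p ^ k * p ^ l := by rw [hq, pow_add]
  have hgpos : 0 < p ^ k := pow_pos hp.pos k
  have hlpos : 0 < p ^ l := pow_pos hp.pos l
  rw [hgk] at hb ⊢
  have hS : Squartic q a = (p ^ k : ℕ) * Squartic (p ^ l) b := by
    rw [hqg, hb, Squartic_scale _ _ hgpos hlpos]
  have hg' : ((p ^ k : ℕ) : ℝ) ≠ 0 := by positivity
  have hl' : ((p ^ l : ℕ) : ℝ) ≠ 0 := by positivity
  have e1 : ‖Squartic q a‖ / q = ‖Squartic (p ^ l) b‖ / (p ^ l : ℕ) := by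
    rw [hS, norm_mul, Complex.norm_natCast, hqg]
    push_cast
    push_cast at hg'
    rw [mul_div_mul_left _ _ hg']
  have e2 : ((p ^ k : ℕ) : ℝ) / q = 1 / (p ^ l : ℕ) := by
    rw [hqg]; push_cast; push_cast at hg' hl'; field_simp
  rw [e1, e2, div_pow]
  rcases Nat.eq_zero_or_pos l with rfl | hl
  · have := norm_Squartic_le (p ^ 0) b
    simp only [pow_zero, Nat.cast_one] at this ⊢
    simp only [one_pow, div_one, mul_one]
    calc ‖Squartic 1 b‖ ^ 4 ≤ 1 ^ 4 := by gcongr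
      _ = 1 := by norm_num
      _ ≤ _ := hK1
  have hnd : ¬ (p : ℤ) ∣ b := by
    rintro ⟨b', rfl⟩
    have h1 : ((p ^ (k + 1) : ℕ) : ℤ) ∣ a := ⟨b', by rw [hb]; push_cast; ring⟩
    have h2 : ((p ^ (k + 1) : ℕ) : ℤ) ∣ q := by
      rw [hq]
      exact_mod_cast pow_dvd_pow p (by omega : k + 1 ≤ k + l)
    have h3 := Int.dvd_coe_gcd h2 h1
    rw [hgk] at h3
    have h4 := Nat.le_of_dvd hgpos (by exact_mod_cast h3)
    have h5 := Nat.pow_lt_pow_right hp.one_lt (show k < k + 1 by omega)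
    omega
  have := Squartic_bound_coprime p hp b hnd l
  have hl2 : (0 : ℝ) < (p ^ l : ℕ) := by exact_mod_cast hlpos
  rw [div_le_iff₀ (by positivity)]
  refine this.trans (le_of_eq ?_)
  push_cast
  push_cast at hl'
  field_simp

lemma wt_nonneg (q : ℕ) (a : ℤ) : 0 ≤ wt q a := by unfold wt; positivity

lemma wt_val (q : ℕ) [NeZero q] (a : ℤ) : wt q a = wt q ((a : ZMod q).val : ℤ) := by
  unfold wt
  rw [ZMod.val_intCast]
  rw [Int.gcd_comm _ (a % _), Int.gcd_emod, Int.gcd_comm]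

lemma sum_wt_le (p h : ℕ) (hp : p.Prime) [NeZero (p ^ h)] :
    ∑ y : ZMod (p ^ h), wt (p ^ h) (y.val : ℤ) ≤ 2 := by
  have hq0 : 0 < p ^ h := pow_pos hp.pos h
  have e1 : ∑ y : ZMod (p ^ h), wt (p ^ h) (y.val : ℤ) =
      ∑ r ∈ Finset.Icc 1 (p ^ h), wt (p ^ h) (r : ℤ) := by
    rw [← sum_Icc_eq_zmod]
    refine Finset.sum_congr rfl fun r _ => ?_
    rw [wt_val (p ^ h) (r : ℤ)]
    simp
  rw [e1]
  have e2 : ∀ r ∈ Finset.Icc 1 (p ^ h), wt (p ^ h) (r : ℤ) ≤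
      ∑ d ∈ (p ^ h).divisors, if d ∣ r then ((d : ℝ) / (p ^ h : ℕ)) ^ 2 else 0 := by
    intro r _
    have hm : Int.gcd (p ^ h : ℕ) (r : ℤ) ∈ (p ^ h).divisors := by
      rw [Nat.mem_divisors]
      refine ⟨?_, hq0.ne'⟩
      rw [Int.gcd_natCast_natCast]
      exact Nat.gcd_dvd_left _ _
    refine le_trans ?_ (Finset.single_le_sum (f := fun d : ℕ => if d ∣ r then
      ((d : ℝ) / (p ^ h : ℕ)) ^ 2 else 0) ?_ hm)
    · have : Int.gcd (p ^ h : ℕ) (r : ℤ) ∣ r := by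
        rw [Int.gcd_natCast_natCast]
        exact Nat.gcd_dvd_right _ _
      rw [if_pos this]
      exact le_rfl
    · intro d _
      split_ifs <;> positivity
  refine (Finset.sum_le_sum e2).trans ?_
  rw [Finset.sum_comm]
  have e3 : ∀ d ∈ (p ^ h).divisors, (∑ r ∈ Finset.Icc 1 (p ^ h),
      if d ∣ r then ((d : ℝ) / (p ^ h : ℕ)) ^ 2 else 0) = (d : ℝ) / (p ^ h : ℕ) := by
    intro d hd
    rw [← Finset.sum_filter, Finset.sum_const]
    have := Nat.Ioc_filter_dvd_card_eq_div (p ^ h) d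
    have h2 : Finset.Icc 1 (p ^ h) = Finset.Ioc 0 (p ^ h) := rfl
    rw [h2, this, nsmul_eq_mul, Nat.cast_div (Nat.dvd_of_mem_divisors hd)]
    · have : (d : ℝ) ≠ 0 := by exact_mod_cast (Nat.pos_of_mem_divisors hd).ne'
      have : ((p ^ h : ℕ) : ℝ) ≠ 0 := by exact_mod_cast hq0.ne'
      field_simp
    · exact_mod_cast (Nat.pos_of_mem_divisors hd).ne'
  rw [Finset.sum_congr rfl e3, Nat.sum_divisors_prime_pow hp, ← Finset.sum_div,
    div_le_iff₀ (by exact_mod_cast hq0)]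
  have e4 : ∀ n, ∑ k ∈ Finset.range (n + 1), p ^ k ≤ 2 * p ^ n := by
    intro n
    induction n with
    | zero => simp
    | succ n ih =>
      rw [Finset.sum_range_succ]
      have := Nat.mul_le_mul_left (p ^ n) hp.two_le
      rw [pow_succ]
      omega
  exact_mod_cast e4 h

lemma fiber_card (q : ℕ) [NeZero q] (B : Matrix (Fin 3) (Fin 3) ℤ) (D : ℤ) (hD : B.det ∣ D)
    (y : Fin 3 → ZMod q) :
    (Finset.univ.filter fun c : Fin 3 → ZMod q =>
      (fun k => ∑ i, (B i k : ZMod q) * c i) = y).card ≤ (Int.gcd q D) ^ 3 := by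
  rcases Finset.eq_empty_or_nonempty (Finset.univ.filter fun c : Fin 3 → ZMod q =>
      (fun k => ∑ i, (B i k : ZMod q) * c i) = y) with he | ⟨c0, hc0⟩
  · rw [he]; simp
  rw [Finset.mem_filter] at hc0
  have hEpos : 0 < Int.gcd q D := Int.gcd_pos_of_ne_zero_left _ (by exact_mod_cast NeZero.ne q)
  have hker : ∀ c : Fin 3 → ZMod q, (∀ k, ∑ i, (B i k : ZMod q) * c i = 0) →
      ∀ i, (Int.gcd q D) • c i = 0 := by
    intro c hc
    set B' : Matrix (Fin 3) (Fin 3) (ZMod q) := B.map (Int.castRingHom (ZMod q)) with hB'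
    have h1 : Matrix.vecMul c B' = 0 := by
      funext k
      rw [Pi.zero_apply, ← hc k]
      simp [Matrix.vecMul, dotProduct, hB', mul_comm]
    have h2 : B'.det • c = 0 := by
      have := congrArg (fun v => Matrix.vecMul v B'.adjugate) h1
      simp only [Matrix.vecMul_vecMul, Matrix.mul_adjugate, Matrix.zero_vecMul] at this
      rw [Matrix.vecMul_smul, Matrix.vecMul_one] at this
      exact this
    have h3 : B'.det = (B.det : ZMod q) := by
      rw [hB']
      exact (RingHom.map_det (Int.castRingHom (ZMod q)) B).symm
    intro i
    have h4 : (B.det : ZMod q) * c i = 0 := by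
      have := congrFun h2 i
      rw [h3] at this
      exact this
    have h5 : (D : ZMod q) * c i = 0 := by
      obtain ⟨e, rfl⟩ := hD
      rw [Int.cast_mul, mul_comm (B.det : ZMod q), mul_assoc, h4, mul_zero]
    have h6 := congrArg (Int.cast : ℤ → ZMod q) (Int.gcd_eq_gcd_ab (q : ℤ) D)
    push_cast at h6
    rw [nsmul_eq_mul, h6]
    simp only [CharP.cast_eq_zero, zero_mul, zero_add]
    rw [mul_right_comm, h5, zero_mul]
  have hsub : (Finset.univ.filter fun c : Fin 3 → ZMod q =>
      (fun k => ∑ i, (B i k : ZMod q) * c i) = y).card ≤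
      (Fintype.piFinset fun _ : Fin 3 =>
        (Finset.univ.filter fun x : ZMod q => (Int.gcd q D) • x = 0)).card := by
    refine Finset.card_le_card_of_injOn (fun c => c - c0) ?_ ?_
    · intro c hc
      rw [Finset.mem_coe, Finset.mem_filter] at hc
      rw [Finset.mem_coe, Fintype.mem_piFinset]
      intro i
      rw [Finset.mem_filter]
      refine ⟨Finset.mem_univ _, hker (c - c0) (fun k => ?_) i⟩
      have h1 := congrFun hc.2 k
      have h2 := congrFun hc0.2 k
      simp only [Pi.sub_apply, mul_sub, Finset.sum_sub_distrib]
      rw [h1, h2, sub_self]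
    · intro c _ c' _ h
      exact sub_left_injective h
  refine hsub.trans ?_
  rw [Fintype.card_piFinset, Finset.prod_const, Finset.card_univ, Fintype.card_fin]
  exact Nat.pow_le_pow_left (IsAddCyclic.card_nsmul_eq_zero_le hEpos) 3

lemma sum_two_wt (p h : ℕ) (hp : p.Prime) [NeZero (p ^ h)] (B : Matrix (Fin 3) (Fin 3) ℤ) (D : ℤ)
    (hD : B.det ∣ D) :
    ∑ c ∈ Fintype.piFinset (fun _ : Fin 3 => Finset.Icc 1 (p ^ h)),
      wt (p ^ h) (∑ i, B i 0 * (c i : ℤ)) * wt (p ^ h) (∑ i, B i 1 * (c i : ℤ)) ≤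
      (Int.gcd (p ^ h : ℕ) D : ℝ) ^ 3 * (4 * (p ^ h : ℕ)) := by
  set q := p ^ h with hq
  let w : ZMod q → ℝ := fun y => wt q (y.val : ℤ)
  have hw0 : ∀ y, 0 ≤ w y := fun y => wt_nonneg _ _
  have hw2 : ∑ y, w y ≤ 2 := sum_wt_le p h hp
  let φ : (Fin 3 → ZMod q) → (Fin 3 → ZMod q) := fun c k => ∑ i, (B i k : ZMod q) * c i
  have e1 : ∑ c ∈ Fintype.piFinset (fun _ : Fin 3 => Finset.Icc 1 q),
      wt q (∑ i, B i 0 * (c i : ℤ)) * wt q (∑ i, B i 1 * (c i : ℤ)) =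
      ∑ c : Fin 3 → ZMod q, w (φ c 0) * w (φ c 1) := by
    rw [← sum_pi_Icc_eq_zmod q (fun c => w (φ c 0) * w (φ c 1))]
    refine Finset.sum_congr rfl fun c _ => ?_
    rw [wt_val q (∑ i, B i 0 * (c i : ℤ)), wt_val q (∑ i, B i 1 * (c i : ℤ))]
    push_cast
    rfl
  rw [e1, ← Finset.sum_fiberwise (s := Finset.univ) (g := φ)]
  have e2 : ∀ y ∈ (Finset.univ : Finset (Fin 3 → ZMod q)),
      ∑ c ∈ Finset.univ.filter (fun c => φ c = y), w (φ c 0) * w (φ c 1) ≤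
      (Int.gcd q D : ℝ) ^ 3 * (w (y 0) * w (y 1)) := by
    intro y _
    rw [Finset.sum_congr rfl (g := fun _ => w (y 0) * w (y 1))
      (fun c hc => by rw [(Finset.mem_filter.1 hc).2]), Finset.sum_const, nsmul_eq_mul]
    refine mul_le_mul_of_nonneg_right ?_ (mul_nonneg (hw0 _) (hw0 _))
    exact_mod_cast fiber_card q B D hD y
  refine (Finset.sum_le_sum e2).trans ?_
  rw [← Finset.mul_sum]
  refine mul_le_mul_of_nonneg_left ?_ (by positivity)
  have e3 := Finset.prod_univ_sum (fun _ : Fin 3 => (Finset.univ : Finset (ZMod q)))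
    (![w, w, fun _ => 1] : Fin 3 → ZMod q → ℝ)
  rw [Fintype.piFinset_univ] at e3
  simp only [Fin.prod_univ_three, Matrix.cons_val_zero, Matrix.cons_val_one, Matrix.cons_val,
    mul_one, Finset.sum_const, Finset.card_univ, ZMod.card, nsmul_eq_mul] at e3
  rw [← e3]
  have h0 : 0 ≤ ∑ y, w y := Finset.sum_nonneg fun y _ => hw0 y
  have h4 : (∑ y, w y) * (∑ y, w y) ≤ 4 := by nlinarith
  exact mul_le_mul_of_nonneg_right h4 (by positivity)

lemma fin4_compl : ∀ a b : Fin 4, a ≠ b → ∃ m n : Fin 4, m ≠ n ∧ a ≠ m ∧ a ≠ n ∧ b ≠ m ∧ b ≠ n ∧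
    (Finset.univ : Finset (Fin 4)) = {a, b, m, n} := by
  decide

lemma fin4_third : ∀ a b : Fin 4, a ≠ b → ∃ o : Fin 4, a ≠ o ∧ b ≠ o := by
  decide

/-- the three columns `a, b, c` of `V` as a square matrix. -/
def sub3 (V : Matrix (Fin 3) (Fin 4) ℤ) (a b c : Fin 4) : Matrix (Fin 3) (Fin 3) ℤ :=
  Matrix.of fun i k => V i (![a, b, c] k)

lemma dvd_det_mul (B : Matrix (Fin 3) (Fin 3) ℤ) (c : Fin 3 → ℤ) (g : ℤ)
    (h : ∀ k, g ∣ ∑ i, B i k * c i) (i : Fin 3) : g ∣ B.det * c i := by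
  have h1 : Matrix.vecMul (Matrix.vecMul c B) B.adjugate = B.det • c := by
    rw [Matrix.vecMul_vecMul, Matrix.mul_adjugate, Matrix.vecMul_smul, Matrix.vecMul_one]
  have h2 := congrFun h1 i
  rw [Pi.smul_apply, smul_eq_mul] at h2
  rw [← h2]
  change g ∣ ∑ k, Matrix.vecMul c B k * B.adjugate k i
  refine Finset.dvd_sum fun k _ => Dvd.dvd.mul_right ?_ _
  have h3 : Matrix.vecMul c B k = ∑ i, B i k * c i := by
    simp [Matrix.vecMul, dotProduct, mul_comm]
  rw [h3]
  exact h k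

lemma min_gcd_le (p h : ℕ) (hp : p.Prime) (B : Matrix (Fin 3) (Fin 3) ℤ) (D : ℤ) (hD : B.det ∣ D)
    (c : Fin 3 → ℕ) (hc : gq (p ^ h) c = 1) (k0 : Fin 3)
    (hmin : ∀ k, Int.gcd (p ^ h : ℕ) (∑ i, B i k0 * (c i : ℤ)) ≤
      Int.gcd (p ^ h : ℕ) (∑ i, B i k * (c i : ℤ))) :
    Int.gcd (p ^ h : ℕ) (∑ i, B i k0 * (c i : ℤ)) ≤ Int.gcd (p ^ h : ℕ) D := by
  have hq0 : 0 < p ^ h := pow_pos hp.pos h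
  have hEpos : 0 < Int.gcd (p ^ h : ℕ) D :=
    Int.gcd_pos_of_ne_zero_left _ (by exact_mod_cast hq0.ne')
  have hpow : ∀ k, ∃ e ≤ h, Int.gcd (p ^ h : ℕ) (∑ i, B i k * (c i : ℤ)) = p ^ e := by
    intro k
    refine (Nat.dvd_prime_pow hp).1 ?_
    have := Int.gcd_dvd_left ((p ^ h : ℕ) : ℤ) (∑ i, B i k * (c i : ℤ))
    exact_mod_cast this
  obtain ⟨e, heh, he⟩ := hpow k0
  rw [he]
  have hdv : ∀ k, ((p ^ e : ℕ) : ℤ) ∣ ∑ i, B i k * (c i : ℤ) := by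
    intro k
    obtain ⟨f, _, hf⟩ := hpow k
    have h1 := hmin k
    rw [he, hf] at h1
    have h2 := (Nat.pow_le_pow_iff_right hp.one_lt).1 h1
    have h3 := Int.gcd_dvd_right ((p ^ h : ℕ) : ℤ) (∑ i, B i k * (c i : ℤ))
    rw [hf] at h3
    exact dvd_trans (by exact_mod_cast pow_dvd_pow p h2) h3
  rcases Nat.eq_zero_or_pos e with rfl | hepos
  · rw [pow_zero]; exact hEpos
  have hex : ∃ i, ¬ p ∣ c i := by
    by_contra hcon
    push Not at hcon
    have : p ∣ gq (p ^ h) c :=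
      Nat.dvd_gcd (dvd_pow_self p (by omega)) (Nat.dvd_gcd (hcon 0) (Nat.dvd_gcd (hcon 1) (hcon 2)))
    rw [hc] at this
    exact hp.one_lt.ne' (Nat.dvd_one.1 this)
  obtain ⟨i, hi⟩ := hex
  have h1 := dvd_det_mul B (fun i => (c i : ℤ)) _ hdv i
  have h2 : IsCoprime ((p ^ e : ℕ) : ℤ) (c i : ℤ) := by
    rw [Nat.isCoprime_iff_coprime]
    exact Nat.Coprime.pow_left _ ((Nat.Prime.coprime_iff_not_dvd hp).2 hi)
  have h3 := (h2.dvd_of_dvd_mul_right h1).trans hD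
  have h4 : ((p ^ e : ℕ) : ℤ) ∣ ((p ^ h : ℕ) : ℤ) := by exact_mod_cast pow_dvd_pow p heh
  exact Nat.le_of_dvd hEpos (by exact_mod_cast Int.dvd_coe_gcd h4 h3)

lemma prod_wt_le (p h : ℕ) (hp : p.Prime) (V : Matrix (Fin 3) (Fin 4) ℤ) (D : ℤ)
    (hD : ∀ a b c, a ≠ b → a ≠ c → b ≠ c → (sub3 V a b c).det ∣ D)
    (c : Fin 3 → ℕ) (hc : gq (p ^ h) c = 1) :
    ∃ m n : Fin 4, m ≠ n ∧ ∏ k, wt (p ^ h) (∑ i, V i k * (c i : ℤ)) ≤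
      ((Int.gcd (p ^ h : ℕ) D : ℝ) / (p ^ h : ℕ)) ^ 4 *
        (wt (p ^ h) (∑ i, V i m * (c i : ℤ)) * wt (p ^ h) (∑ i, V i n * (c i : ℤ))) := by
  set g : Fin 4 → ℕ := fun k => Int.gcd (p ^ h : ℕ) (∑ i, V i k * (c i : ℤ)) with hg
  set E := Int.gcd (p ^ h : ℕ) D with hE
  have hthree : ∀ x y z : Fin 4, x ≠ y → x ≠ z → y ≠ z → E < g x → E < g y → E < g z → False := by
    intro x y z hxy hxz hyz hx hy hz
    let g' : Fin 3 → ℕ := fun k => Int.gcd (p ^ h : ℕ) (∑ i, sub3 V x y z i k * (c i : ℤ))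
    obtain ⟨k0, -, hk0⟩ := Finset.exists_min_image (Finset.univ : Finset (Fin 3)) g'
      ⟨0, Finset.mem_univ _⟩
    have := min_gcd_le p h hp (sub3 V x y z) D (hD x y z hxy hxz hyz) c hc k0
      (fun k => hk0 k (Finset.mem_univ k))
    have h2 : E < g' k0 := by
      fin_cases k0
      · exact hx
      · exact hy
      · exact hz
    exact absurd this (not_le.2 h2)
  have hcard : (Finset.univ.filter fun k => E < g k).card ≤ 2 := by
    by_contra hcon
    push Not at hcon
    obtain ⟨x, hx, y, hy, z, hz, hxy, hxz, hyz⟩ := Finset.two_lt_card.1 hcon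
    simp only [Finset.mem_filter, Finset.mem_univ, true_and] at hx hy hz
    exact hthree x y z hxy hxz hyz hx hy hz
  have hcard2 : 1 < (Finset.univ.filter fun k => ¬ E < g k).card := by
    have := Finset.card_filter_add_card_filter_not (s := (Finset.univ : Finset (Fin 4))) (fun k => E < g k)
    simp only [Finset.card_univ, Fintype.card_fin] at this
    omega
  obtain ⟨a, ha, b, hb, hab⟩ := Finset.one_lt_card.1 hcard2
  simp only [Finset.mem_filter, Finset.mem_univ, true_and, not_lt] at ha hb
  obtain ⟨m, n, hmn, ham, han, hbm, hbn, huniv⟩ := fin4_compl a b hab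
  refine ⟨m, n, hmn, ?_⟩
  rw [huniv, Finset.prod_insert (by simp [hab, ham, han]), Finset.prod_insert (by simp [hbm, hbn]),
    Finset.prod_pair hmn, ← mul_assoc]
  refine mul_le_mul_of_nonneg_right ?_ (mul_nonneg (wt_nonneg _ _) (wt_nonneg _ _))
  have hle : ∀ k, g k ≤ E → wt (p ^ h) (∑ i, V i k * (c i : ℤ)) ≤ ((E : ℝ) / (p ^ h : ℕ)) ^ 2 := by
    intro k hk
    unfold wt
    gcongr
  calc _ ≤ ((E : ℝ) / (p ^ h : ℕ)) ^ 2 * ((E : ℝ) / (p ^ h : ℕ)) ^ 2 :=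
        mul_le_mul (hle a ha) (hle b hb) (wt_nonneg _ _) (by positivity)
    _ = _ := by ring

lemma sum_prod_wt (p h : ℕ) (hp : p.Prime) (V : Matrix (Fin 3) (Fin 4) ℤ) (D : ℤ)
    (hD : ∀ a b c, a ≠ b → a ≠ c → b ≠ c → (sub3 V a b c).det ∣ D) :
    ∑ c ∈ (Fintype.piFinset (fun _ : Fin 3 => Finset.Icc 1 (p ^ h))).filter
        (fun c => gq (p ^ h) c = 1), ∏ k, wt (p ^ h) (∑ i, V i k * (c i : ℤ)) ≤
      64 * (Int.gcd (p ^ h : ℕ) D : ℝ) ^ 7 / ((p ^ h : ℕ) : ℝ) ^ 3 := by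
  have : NeZero (p ^ h) := ⟨(pow_pos hp.pos _).ne'⟩
  have hqn : 0 < p ^ h := pow_pos hp.pos h
  have H1 := prod_wt_le p h hp V D hD
  have H2 := fun B => sum_two_wt p h hp B D
  generalize p ^ h = q at *
  have hq0 : (0 : ℝ) < (q : ℝ) := by exact_mod_cast hqn
  generalize Int.gcd (q : ℕ) D = E at *
  let f : Fin 4 → (Fin 3 → ℕ) → ℝ := fun k c => wt q (∑ i, V i k * (c i : ℤ))
  have hf0 : ∀ k c, 0 ≤ f k c := fun k c => wt_nonneg _ _
  obtain ⟨Pr, hPr, hPr'⟩ : ∃ Pr : Finset (Fin 4 × Fin 4), (∀ m n, m ≠ n → (m, n) ∈ Pr) ∧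
      ∀ x ∈ Pr, x.1 ≠ x.2 :=
    ⟨Finset.univ.filter fun x => x.1 ≠ x.2, by simp, by simp⟩
  have e1 : ∀ c ∈ (Fintype.piFinset (fun _ : Fin 3 => Finset.Icc 1 q)).filter
        (fun c => gq q c = 1), ∏ k, f k c ≤
        ∑ x ∈ Pr, ((E : ℝ) / q) ^ 4 * (f x.1 c * f x.2 c) := by
    intro c hc
    obtain ⟨m, n, hmn, hle⟩ := H1 c (Finset.mem_filter.1 hc).2
    have hle' : ∏ k, f k c ≤ ((E : ℝ) / q) ^ 4 * (f m c * f n c) := hle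
    have hmem : (m, n) ∈ Pr := hPr m n hmn
    have h5 : ∀ x ∈ Pr, 0 ≤ ((E : ℝ) / q) ^ 4 * (f x.1 c * f x.2 c) :=
      fun x _ => mul_nonneg (by positivity) (mul_nonneg (hf0 _ _) (hf0 _ _))
    have h6 := Finset.single_le_sum h5 hmem
    exact hle'.trans h6
  refine (Finset.sum_le_sum e1).trans ?_
  rw [Finset.sum_comm]
  have e2 : ∀ x ∈ Pr, ∑ c ∈ (Fintype.piFinset (fun _ : Fin 3 => Finset.Icc 1 q)).filter
        (fun c => gq q c = 1), ((E : ℝ) / q) ^ 4 * (f x.1 c * f x.2 c) ≤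
        4 * (E : ℝ) ^ 7 / (q : ℝ) ^ 3 := by
    intro x hx
    have hx' := hPr' x hx
    obtain ⟨o, h1, h2⟩ := fin4_third x.1 x.2 hx'
    have h3 := H2 (sub3 V x.1 x.2 o) (hD _ _ _ hx' h1 h2)
    rw [← Finset.mul_sum]
    calc _ ≤ ((E : ℝ) / q) ^ 4 * ((E : ℝ) ^ 3 * (4 * q)) := by
          refine mul_le_mul_of_nonneg_left (le_trans ?_ h3) (by positivity)
          exact Finset.sum_le_sum_of_subset_of_nonneg (Finset.filter_subset _ _)
            (fun c _ _ => mul_nonneg (hf0 _ _) (hf0 _ _))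
      _ = _ := by field_simp
  refine (Finset.sum_le_card_nsmul _ _ _ e2).trans ?_
  rw [nsmul_eq_mul]
  have hcard : (Pr.card : ℝ) ≤ 16 := by
    have : Pr.card ≤ 16 := (Finset.card_le_univ _).trans (by simp)
    exact_mod_cast this
  calc (Pr.card : ℝ) * (4 * (E : ℝ) ^ 7 / (q : ℝ) ^ 3) ≤ 16 * (4 * (E : ℝ) ^ 7 / (q : ℝ) ^ 3) := by
        gcongr
    _ = _ := by ring

/-- index embedding of the blocks. -/
def bidx {s : ℕ} (hs : 32 ≤ s) (x : Fin 8 × Fin 4) : Fin s :=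
  ⟨4 * x.1.val + x.2.val, by have h1 := x.1.isLt; have h2 := x.2.isLt; omega⟩

lemma bidx_inj {s : ℕ} (hs : 32 ≤ s) : Function.Injective (bidx hs) := by
  rintro ⟨a, b⟩ ⟨c, d⟩ h
  have h1 : 4 * a.val + b.val = 4 * c.val + d.val := congrArg Fin.val h
  have h2 := b.isLt
  have h3 := d.isLt
  ext <;> simp <;> omega

/-- the blocks. -/
def blk {s : ℕ} (hs : 32 ≤ s) (A : Matrix (Fin 3) (Fin s) ℤ) (l : Fin 8) :
    Matrix (Fin 3) (Fin 4) ℤ := Matrix.of fun i k => A i (bidx hs (l, k))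

lemma det_ne_zero_of_hns (V : Matrix (Fin 3) (Fin 4) ℤ) (hV : HighlyNonSingular V) (a b c : Fin 4)
    (hab : a ≠ b) (hac : a ≠ c) (hbc : b ≠ c) : (sub3 V a b c).det ≠ 0 := by
  have h := hV.2 a b c hab hac hbc
  set M : Matrix (Fin 3) (Fin 3) ℚ :=
    Matrix.of ![(fun i => (V i a : ℚ)), (fun i => (V i b : ℚ)), (fun i => (V i c : ℚ))] with hM
  have h1 : IsUnit M := Matrix.linearIndependent_rows_iff_isUnit.1 h
  have h2 : M.det ≠ 0 := ((Matrix.isUnit_iff_isUnit_det M).1 h1).ne_zero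
  have h3 : M = ((sub3 V a b c).map (Int.castRingHom ℚ)).transpose := by
    ext i j
    fin_cases i <;> rfl
  rw [h3, Matrix.det_transpose] at h2
  intro h0
  apply h2
  have := RingHom.map_det (Int.castRingHom ℚ) (sub3 V a b c)
  rw [h0, map_zero] at this
  exact this.symm

lemma exists_D {s : ℕ} (hs : 32 ≤ s) (A : Matrix (Fin 3) (Fin s) ℤ) (hA : Propitious A) :
    ∃ D : ℤ, D ≠ 0 ∧ ∀ l a b c, a ≠ b → a ≠ c → b ≠ c → (sub3 (blk hs A l) a b c).det ∣ D := by
  obtain ⟨_, hA⟩ := hA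
  let f : Fin 8 × Fin 4 × Fin 4 × Fin 4 → ℤ := fun x =>
    if x.2.1 ≠ x.2.2.1 ∧ x.2.1 ≠ x.2.2.2 ∧ x.2.2.1 ≠ x.2.2.2 then
      (sub3 (blk hs A x.1) x.2.1 x.2.2.1 x.2.2.2).det else 1
  refine ⟨∏ x, f x, ?_, ?_⟩
  · rw [Finset.prod_ne_zero_iff]
    intro x _
    simp only [f]
    split_ifs with h
    · exact det_ne_zero_of_hns _ (hA x.1) _ _ _ h.1 h.2.1 h.2.2
    · exact one_ne_zero
  · intro l a b c hab hac hbc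
    have h1 : f (l, a, b, c) ∣ ∏ x, f x := Finset.dvd_prod_of_mem f (Finset.mem_univ _)
    have h2 : f (l, a, b, c) = (sub3 (blk hs A l) a b c).det := if_pos ⟨hab, hac, hbc⟩
    rwa [h2] at h1

lemma norm_TBW {s : ℕ} (A : Matrix (Fin 3) (Fin s) ℤ) (q : ℕ) (c : Fin 3 → ℕ) :
    ‖TBW A q c‖ = ∏ j, (‖Squartic q (∑ i, A i j * (c i : ℤ))‖ / q) := by
  unfold TBW
  rw [norm_mul, norm_zpow, Complex.norm_natCast, norm_prod, Finset.prod_div_distrib, Finset.prod_const,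
    Finset.card_univ, Fintype.card_fin, zpow_neg, zpow_natCast, div_eq_inv_mul]

lemma norm_TBW_le {s : ℕ} (hs : 32 ≤ s) (A : Matrix (Fin 3) (Fin s) ℤ) (p h : ℕ) (hp : p.Prime)
    (c : Fin 3 → ℕ) :
    ‖TBW A (p ^ h) c‖ ≤ ∑ l : Fin 8, (KG p : ℝ) ^ 8 *
      ∏ k, wt (p ^ h) (∑ i, blk hs A l i k * (c i : ℤ)) := by
  rw [norm_TBW]
  have hqn : 0 < p ^ h := pow_pos hp.pos h
  have H := fun a => Squartic_bound p hp a h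
  generalize p ^ h = q at *
  have hq0 : (0 : ℝ) < q := by exact_mod_cast hqn
  let x : Fin s → ℝ := fun j => ‖Squartic q (∑ i, A i j * (c i : ℤ))‖ / q
  have hx0 : ∀ j, 0 ≤ x j := fun j => by positivity
  have hx1 : ∀ j, x j ≤ 1 := fun j => by
    rw [div_le_one hq0]; exact norm_Squartic_le _ _
  let F : Fin 8 → ℝ := fun l => ∏ k : Fin 4, x (bidx hs (l, k))
  have hF0 : ∀ l, 0 ≤ F l := fun l => Finset.prod_nonneg fun k _ => hx0 _
  have h1 : ∏ j, x j ≤ ∏ l, F l := by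
    have e1 : ∏ l, F l = ∏ j ∈ Finset.univ.image (bidx hs), x j := by
      rw [Finset.prod_image (fun a _ b _ hab => bidx_inj hs hab), Fintype.prod_prod_type]
    rw [e1, ← Finset.prod_mul_prod_compl (Finset.univ.image (bidx hs)) x]
    exact mul_le_of_le_one_right (Finset.prod_nonneg fun j _ => hx0 j)
      (Finset.prod_le_one (fun j _ => hx0 j) (fun j _ => hx1 j))
  obtain ⟨l0, -, hl0⟩ := Finset.exists_max_image (Finset.univ : Finset (Fin 8)) F
    ⟨0, Finset.mem_univ _⟩
  have h2 : ∏ l, F l ≤ F l0 ^ 8 := by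
    have := Finset.prod_le_prod (s := Finset.univ) (fun l _ => hF0 l) (fun l hl => hl0 l hl)
    simpa using this
  have h3 : F l0 ^ 8 ≤ (KG p : ℝ) ^ 8 * ∏ k, wt q (∑ i, blk hs A l0 i k * (c i : ℤ)) := by
    have e2 : F l0 ^ 8 = ∏ k : Fin 4, x (bidx hs (l0, k)) ^ 8 := (Finset.prod_pow _ _ _).symm
    rw [e2]
    have e3 : ∀ k ∈ (Finset.univ : Finset (Fin 4)), x (bidx hs (l0, k)) ^ 8 ≤
        (KG p : ℝ) ^ 2 * wt q (∑ i, blk hs A l0 i k * (c i : ℤ)) := fun k _ => H _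
    refine (Finset.prod_le_prod (fun k _ => pow_nonneg (hx0 _) 8) e3).trans (le_of_eq ?_)
    rw [Finset.prod_mul_distrib, Finset.prod_const, Finset.card_univ, Fintype.card_fin]
    ring
  have h4 : ∀ l ∈ (Finset.univ : Finset (Fin 8)),
      0 ≤ (KG p : ℝ) ^ 8 * ∏ k, wt q (∑ i, blk hs A l i k * (c i : ℤ)) := fun l _ =>
    mul_nonneg (by positivity) (Finset.prod_nonneg fun k _ => wt_nonneg _ _)
  exact h1.trans (h2.trans (h3.trans (Finset.single_le_sum h4 (Finset.mem_univ l0))))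

lemma norm_ABW_pp {s : ℕ} (hs : 32 ≤ s) (A : Matrix (Fin 3) (Fin s) ℤ) (D : ℤ)
    (hD : ∀ l a b c, a ≠ b → a ≠ c → b ≠ c → (sub3 (blk hs A l) a b c).det ∣ D)
    (p h : ℕ) (hp : p.Prime) :
    ‖ABW A (p ^ h)‖ ≤ 512 * (KG p : ℝ) ^ 8 * (Int.gcd (p ^ h : ℕ) D : ℝ) ^ 7 /
      ((p ^ h : ℕ) : ℝ) ^ 3 := by
  have e0 : ABW A (p ^ h) = ∑ c ∈ (Fintype.piFinset (fun _ : Fin 3 => Finset.Icc 1 (p ^ h))).filter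
        (fun c => gq (p ^ h) c = 1), TBW A (p ^ h) c := by
    unfold ABW
    rw [← Finset.sum_filter]
    rfl
  rw [e0]
  refine (norm_sum_le _ _).trans ((Finset.sum_le_sum fun c _ => norm_TBW_le hs A p h hp c).trans ?_)
  rw [Finset.sum_comm]
  have e1 := fun l => sum_prod_wt p h hp (blk hs A l) D (hD l)
  have e2 : ∀ l ∈ (Finset.univ : Finset (Fin 8)),
      ∑ c ∈ (Fintype.piFinset (fun _ : Fin 3 => Finset.Icc 1 (p ^ h))).filter
        (fun c => gq (p ^ h) c = 1), (KG p : ℝ) ^ 8 *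
        ∏ k, wt (p ^ h) (∑ i, blk hs A l i k * (c i : ℤ)) ≤
      (KG p : ℝ) ^ 8 * (64 * (Int.gcd (p ^ h : ℕ) D : ℝ) ^ 7 / ((p ^ h : ℕ) : ℝ) ^ 3) := by
    intro l _
    rw [← Finset.mul_sum]
    exact mul_le_mul_of_nonneg_left (e1 l) (by positivity)
  refine (Finset.sum_le_card_nsmul _ _ _ e2).trans (le_of_eq ?_)
  rw [Finset.card_univ, Fintype.card_fin, nsmul_eq_mul]
  push_cast
  ring

lemma exists_bound_pp {s : ℕ} (hs : 32 ≤ s) (A : Matrix (Fin 3) (Fin s) ℤ) (hA : Propitious A) :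
    ∃ (P : ℕ) (B : ℝ), 1 ≤ B ∧ ∀ p h : ℕ, p.Prime → 1 ≤ h →
      ‖ABW A (p ^ h)‖ ≤ (if p < P then B else 1) * (((p ^ h : ℕ) : ℝ) ^ 2)⁻¹ := by
  obtain ⟨D, hD0, hD⟩ := exists_D hs A hA
  have hDn : 1 ≤ D.natAbs := Int.natAbs_pos.2 hD0
  have hDr : (1 : ℝ) ≤ D.natAbs := by exact_mod_cast hDn
  refine ⟨1024 + D.natAbs, 512 * ((1024 : ℝ) ^ 4) ^ 8 * (D.natAbs : ℝ) ^ 7, ?_, ?_⟩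
  · have : (1 : ℝ) ≤ (D.natAbs : ℝ) ^ 7 := one_le_pow₀ hDr
    nlinarith
  intro p h hp hh
  have hmain := norm_ABW_pp hs A D hD p h hp
  have hqp : p ≤ p ^ h := Nat.le_self_pow (by omega) p
  have hq1 : 1 ≤ p ^ h := Nat.one_le_pow _ _ hp.pos
  have hqpr : (p : ℝ) ≤ (p ^ h : ℕ) := by exact_mod_cast hqp
  have hqr : (1 : ℝ) ≤ (p ^ h : ℕ) := by exact_mod_cast hq1
  refine hmain.trans ?_
  have key : ∀ X Y : ℝ, X ≤ Y * (p ^ h : ℕ) → X / ((p ^ h : ℕ) : ℝ) ^ 3 ≤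
      Y * (((p ^ h : ℕ) : ℝ) ^ 2)⁻¹ := by
    intro X Y hXY
    rw [div_le_iff₀ (by positivity)]
    calc X ≤ Y * (p ^ h : ℕ) := hXY
      _ = _ := by field_simp
  apply key
  split_ifs with hlt
  · have hK : (KG p : ℝ) ≤ 1024 ^ 4 := by
      have : KG p ≤ 1024 ^ 4 := by
        unfold KG
        split_ifs with h1
        · exact Nat.pow_le_pow_left h1.le 4
        · norm_num
      exact_mod_cast this
    have hE : (Int.gcd (p ^ h : ℕ) D : ℝ) ≤ D.natAbs := by
      have : Int.gcd (p ^ h : ℕ) D ≤ D.natAbs :=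
        Nat.le_of_dvd (by omega) (Nat.gcd_dvd_right _ _)
      exact_mod_cast this
    calc 512 * (KG p : ℝ) ^ 8 * (Int.gcd (p ^ h : ℕ) D : ℝ) ^ 7
        ≤ 512 * ((1024 : ℝ) ^ 4) ^ 8 * (D.natAbs : ℝ) ^ 7 := by gcongr
      _ ≤ _ := le_mul_of_one_le_right (by positivity) hqr
  · have hK : KG p = 1 := if_neg (by omega)
    have hE : Int.gcd (p ^ h : ℕ) D = 1 := by
      change Nat.Coprime (p ^ h) D.natAbs
      refine Nat.Coprime.pow_left _ ((Nat.Prime.coprime_iff_not_dvd hp).2 fun hdv => ?_)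
      have := Nat.le_of_dvd (by omega) hdv
      omega
    rw [hK, hE]
    have : (1024 : ℝ) ≤ p := by
      have : 1024 ≤ p := by omega
      exact_mod_cast this
    norm_num
    push_cast at hqpr
    linarith

lemma exists_bound {s : ℕ} (hs : 32 ≤ s) (A : Matrix (Fin 3) (Fin s) ℤ) (hA : Propitious A) :
    ∃ C : ℝ, 0 < C ∧ ∀ q : ℕ, 1 ≤ q → ‖ABW A q‖ ≤ C * ((q : ℝ) ^ 2)⁻¹ := by
  obtain ⟨P, B, hB, h⟩ := exists_bound_pp hs A hA
  refine ⟨B ^ P, by positivity, fun q hq => ?_⟩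
  have hq0 : q ≠ 0 := by omega
  have e1 : ABW A q = ∏ p ∈ q.primeFactors, ABW A (p ^ q.factorization p) :=
    (fA_mult A).multiplicative_factorization _ hq0
  have e2 : ((q : ℝ) ^ 2)⁻¹ = ∏ p ∈ q.primeFactors, (((p ^ q.factorization p : ℕ) : ℝ) ^ 2)⁻¹ := by
    conv_lhs => rw [← Nat.prod_factorization_pow_eq_self hq0]
    rw [Finsupp.prod, Nat.support_factorization, Nat.cast_prod, ← Finset.prod_pow, ← Finset.prod_inv_distrib]
  rw [e1, norm_prod, e2]
  have e3 : ∀ p ∈ q.primeFactors, ‖ABW A (p ^ q.factorization p)‖ ≤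
      (if p < P then B else 1) * (((p ^ q.factorization p : ℕ) : ℝ) ^ 2)⁻¹ := by
    intro p hp
    have hp' := Nat.prime_of_mem_primeFactors hp
    exact h p _ hp' (hp'.factorization_pos_of_dvd hq0 (Nat.dvd_of_mem_primeFactors hp))
  refine (Finset.prod_le_prod (fun _ _ => norm_nonneg _) e3).trans ?_
  rw [Finset.prod_mul_distrib]
  refine mul_le_mul_of_nonneg_right ?_ (Finset.prod_nonneg fun _ _ => by positivity)
  rw [← Finset.prod_filter, Finset.prod_const]
  refine pow_le_pow_right₀ hB ?_
  refine (Finset.card_le_card (t := Finset.range P) ?_).trans (by simp)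
  intro p hp
  exact Finset.mem_range.2 (Finset.mem_filter.1 hp).2

lemma exists_cols {s : ℕ} {K : Type*} [Field K] (M : Matrix (Fin 3) (Fin s) K)
    (h : M.rank = 3) : ∃ e : Fin 3 → Fin s, (M.submatrix id e).det ≠ 0 := by
  obtain ⟨κ, a, ha, hspan, hli⟩ := exists_linearIndependent' K M.col
  have : Finite κ := Finite.of_injective a ha
  have : Fintype κ := Fintype.ofFinite κ
  have h1 := finrank_span_eq_card hli
  rw [hspan, ← Matrix.rank_eq_finrank_span_cols, h] at h1
  let eq : Fin 3 ≃ κ := (Fintype.equivFinOfCardEq h1.symm).symm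
  refine ⟨a ∘ eq, ?_⟩
  have h2 : LinearIndependent K (M.submatrix id (a ∘ eq)).col :=
    hli.comp eq eq.injective
  rw [Matrix.linearIndependent_cols_iff_isUnit, Matrix.isUnit_iff_isUnit_det] at h2
  exact h2.ne_zero

/-- Integral data extracted from a non-singular `p`-adic solution. -/
lemma exists_integral_sol {s : ℕ} (A : Matrix (Fin 3) (Fin s) ℤ) (p : ℕ) [Fact p.Prime]
    (x : Fin s → ℚ_[p]) (hx : NonsingularSol A x) :
    ∃ (e : Fin 3 → Fin s) (y : Fin s → ℤ_[p]), (A.submatrix id e).det ≠ 0 ∧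
      (∀ k, y (e k) ≠ 0) ∧ ∀ i, ∑ j, (A i j : ℤ_[p]) * y j ^ 4 = 0 := by
  obtain ⟨hx1, hx2⟩ := hx
  obtain ⟨e, he⟩ := exists_cols _ hx2
  have hM : (Matrix.of fun i j => (A i j : ℚ_[p]) * x j ^ 3).submatrix id e
      = Matrix.of fun i k => (x (e k) ^ 3) * ((A.submatrix id e).map (Int.castRingHom ℚ_[p])) i k := by
    ext i k
    simp [mul_comm]
  rw [hM, Matrix.det_mul_row] at he
  have hdet : ((A.submatrix id e).map (Int.castRingHom ℚ_[p])).det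
      = ((A.submatrix id e).det : ℚ_[p]) := by
    rw [← RingHom.mapMatrix_apply, ← RingHom.map_det]; simp
  rw [hdet] at he
  obtain ⟨b, hb⟩ := IsLocalization.exist_integer_multiples_of_finite (nonZeroDivisors ℤ_[p]) x
  choose y hy using hb
  have hb0 : (algebraMap ℤ_[p] ℚ_[p] b) ≠ 0 := by
    have := nonZeroDivisors.ne_zero b.2
    simpa using this
  have hy' : ∀ j, algebraMap ℤ_[p] ℚ_[p] (y j) = algebraMap ℤ_[p] ℚ_[p] b * x j := by
    intro j
    rw [hy j, Algebra.smul_def]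
  have hinj : Function.Injective (algebraMap ℤ_[p] ℚ_[p]) := IsFractionRing.injective _ _
  refine ⟨e, y, ?_, ?_, ?_⟩
  · intro h0; apply he; simp [h0]
  · intro k h0
    have h1 := hy' (e k)
    rw [h0, map_zero] at h1
    have h2 : x (e k) = 0 := by
      rcases mul_eq_zero.mp h1.symm with h | h
      · exact absurd h hb0
      · exact h
    apply he
    rw [Finset.prod_eq_zero (Finset.mem_univ k) (by rw [h2]; simp), zero_mul]
  · intro i
    apply hinj
    rw [map_sum, map_zero]
    have : ∀ j, algebraMap ℤ_[p] ℚ_[p] ((A i j : ℤ_[p]) * y j ^ 4)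
        = (algebraMap ℤ_[p] ℚ_[p] b) ^ 4 * ((A i j : ℚ_[p]) * x j ^ 4) := by
      intro j
      rw [map_mul, map_pow, hy' j, map_intCast]; ring
    simp_rw [this]
    rw [← Finset.mul_sum, hx1 i, mul_zero]

lemma sum_split_range {s : ℕ} {R : Type*} [CommRing R] (e : Fin 3 → Fin s)
    (he : Function.Injective e) (f : Fin s → R) :
    ∑ j, f j = ∑ k, f (e k) + ∑ j, if j ∈ Set.range e then 0 else f j := by
  have h1 : ∑ k, f (e k) = ∑ j, if j ∈ Set.range e then f j else 0 := by
    rw [← Finset.sum_filter, ← Finset.sum_image (g := e) (f := f) (s := Finset.univ)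
      (fun a _ b _ h => he h)]
    apply Finset.sum_congr _ (fun _ _ => rfl)
    ext j; simp
  rw [h1, ← Finset.sum_add_distrib]
  apply Finset.sum_congr rfl
  intro j _
  split_ifs <;> simp

lemma hensel_lift {s : ℕ} (A : Matrix (Fin 3) (Fin s) ℤ) (p : ℕ) [Fact p.Prime]
    (e : Fin 3 → Fin s) (y : Fin s → ℤ_[p]) (hdet : (A.submatrix id e).det ≠ 0)
    (hy : ∀ k, y (e k) ≠ 0) (hsol : ∀ i, ∑ j, (A i j : ℤ_[p]) * y j ^ 4 = 0) :
    ∃ m : ℕ, ∀ x' : Fin s → ℤ_[p], (∀ j, (p : ℤ_[p]) ^ m ∣ x' j - y j) →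
      ∃ z : Fin s → ℤ_[p], (∀ j, j ∉ Set.range e → z j = x' j) ∧
        ∀ i, ∑ j, (A i j : ℤ_[p]) * z j ^ 4 = 0 := by
  have he : Function.Injective e := by
    intro k l hkl
    by_contra hne
    apply hdet
    exact Matrix.det_zero_of_column_eq hne (fun i => by simp [hkl])
  set A' : Matrix (Fin 3) (Fin s) ℤ_[p] := A.map (Int.castRingHom ℤ_[p]) with hA'
  set Bm : Matrix (Fin 3) (Fin 3) ℤ_[p] := A'.submatrix id e with hB
  set D := Bm.det with hD
  have hDD : D = ((A.submatrix id e).det : ℤ_[p]) := by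
    have : Bm = (Int.castRingHom ℤ_[p]).mapMatrix (A.submatrix id e) := by
      ext; simp [hB, hA']
    rw [hD, this, ← RingHom.map_det]; simp
  have hD0 : D ≠ 0 := by rw [hDD]; exact_mod_cast hdet
  set G := Bm.adjugate * A' with hG
  have hGe : ∀ k l, G k (e l) = if k = l then D else 0 := by
    intro k l
    have : (Bm.adjugate * Bm) k l = (D • (1 : Matrix (Fin 3) (Fin 3) ℤ_[p])) k l := by
      rw [Matrix.adjugate_mul]
    rw [Matrix.mul_apply] at this
    rw [hG, Matrix.mul_apply]
    rw [show ∑ j, Bm.adjugate k j * A' j (e l) = ∑ j, Bm.adjugate k j * Bm j l from rfl, this]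
    simp [Matrix.one_apply]
  -- transformed sums
  have hGsum : ∀ (u : Fin s → ℤ_[p]) (k : Fin 3),
      ∑ j, G k j * u j = D * u (e k) + ∑ j, if j ∈ Set.range e then 0 else G k j * u j := by
    intro u k
    rw [sum_split_range e he]
    congr 1
    simp [hGe]
  have hGA : ∀ (u : Fin s → ℤ_[p]) (k : Fin 3),
      ∑ j, G k j * u j = ∑ i, Bm.adjugate k i * ∑ j, (A i j : ℤ_[p]) * u j := by
    intro u k
    simp_rw [hG, Matrix.mul_apply, Finset.sum_mul, Finset.mul_sum]
    rw [Finset.sum_comm]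
    simp [hA', mul_assoc]
  have hpos : ∀ k, 0 < ‖4 * D * y (e k) ^ 3‖ ^ 2 := by
    intro k
    have : 4 * D * y (e k) ^ 3 ≠ 0 :=
      mul_ne_zero (mul_ne_zero (by norm_num) hD0) (pow_ne_zero _ (hy k))
    positivity
  have hp1 : ((p : ℝ)⁻¹) < 1 := inv_lt_one_of_one_lt₀ (by exact_mod_cast (Fact.out : p.Prime).one_lt)
  have hm : ∃ m : ℕ, ∀ k, ((p : ℝ)⁻¹) ^ m < ‖4 * D * y (e k) ^ 3‖ ^ 2 := by
    have hev : ∀ᶠ m : ℕ in atTop, ∀ k, ((p : ℝ)⁻¹) ^ m < ‖4 * D * y (e k) ^ 3‖ ^ 2 := by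
      rw [Filter.eventually_all]
      intro k
      exact (tendsto_pow_atTop_nhds_zero_of_lt_one (by positivity) hp1).eventually_lt_const (hpos k)
    exact hev.exists
  obtain ⟨m, hm⟩ := hm
  refine ⟨m, fun x' hx' => ?_⟩
  set W : Fin 3 → ℤ_[p] := fun k => ∑ j, if j ∈ Set.range e then 0 else G k j * x' j ^ 4 with hW
  have key : ∀ k, ∃ z : ℤ_[p], D * z ^ 4 + W k = 0 := by
    intro k
    have hdvd : (p : ℤ_[p]) ^ m ∣ D * y (e k) ^ 4 + W k := by
      have h1 := hGsum (fun j => y j ^ 4) k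
      rw [hGA] at h1
      simp_rw [hsol] at h1
      have h2 : D * y (e k) ^ 4 + W k
          = ∑ j, if j ∈ Set.range e then 0 else G k j * (x' j ^ 4 - y j ^ 4) := by
        have h3 : ∑ j, (if j ∈ Set.range e then 0 else G k j * (x' j ^ 4 - y j ^ 4))
          = W k - ∑ j, if j ∈ Set.range e then 0 else G k j * y j ^ 4 := by
          rw [hW, ← Finset.sum_sub_distrib]
          apply Finset.sum_congr rfl
          intro j _
          split_ifs <;> ring
        rw [h3]
        simp at h1 ⊢
        linear_combination -h1
      rw [h2]
      apply Finset.dvd_sum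
      intro j _
      split_ifs
      · exact dvd_zero _
      · exact ((hx' j).trans (sub_dvd_pow_sub_pow _ _ 4)).mul_left _
    let F : Polynomial ℤ_[p] := Polynomial.C D * Polynomial.X ^ 4 + Polynomial.C (W k)
    have hFe : ∀ t, F.aeval t = D * t ^ 4 + W k := by
      intro t; simp [F]
    have hFd : F.derivative.aeval (y (e k)) = 4 * D * y (e k) ^ 3 := by
      simp [F]; ring
    have hnorm : ‖F.aeval (y (e k))‖ < ‖F.derivative.aeval (y (e k))‖ ^ 2 := by
      rw [hFe, hFd]
      refine lt_of_le_of_lt ?_ (hm k)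
      have := (PadicInt.norm_le_pow_iff_mem_span_pow (D * y (e k) ^ 4 + W k) m).mpr
        (Ideal.mem_span_singleton.mpr hdvd)
      simpa [zpow_neg, inv_pow] using this
    obtain ⟨z, hz, -⟩ := hensels_lemma hnorm
    exact ⟨z, by rw [← hFe]; exact hz⟩
  choose w hw using key
  let z : Fin s → ℤ_[p] := fun j => if h : j ∈ Set.range e then w h.choose else x' j
  have hze : ∀ k, z (e k) = w k := by
    intro k
    have hk : e k ∈ Set.range e := ⟨k, rfl⟩
    simp only [z, dif_pos hk]
    congr 1
    exact he hk.choose_spec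
  have hzn : ∀ j, j ∉ Set.range e → z j = x' j := fun j hj => by simp only [z, dif_neg hj]
  refine ⟨z, hzn, ?_⟩
  have hGz : ∀ k, ∑ j, G k j * z j ^ 4 = 0 := by
    intro k
    rw [hGsum (fun j => z j ^ 4) k, hze]
    refine Eq.trans ?_ (hw k)
    congr 1
    apply Finset.sum_congr rfl
    intro j _
    split_ifs with h
    · rfl
    · rw [hzn j h]
  set v : Fin 3 → ℤ_[p] := fun i => ∑ j, (A i j : ℤ_[p]) * z j ^ 4 with hv
  have hadj : Bm.adjugate.mulVec v = 0 := by
    ext k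
    have := hGA (fun j => z j ^ 4) k
    rw [hGz] at this
    simp only [Matrix.mulVec, dotProduct, hv, Pi.zero_apply]
    rw [← this]
  have hDv : D • v = 0 := by
    have : (Bm * Bm.adjugate).mulVec v = 0 := by
      rw [← Matrix.mulVec_mulVec, hadj, Matrix.mulVec_zero]
    rwa [Matrix.mul_adjugate, Matrix.smul_mulVec, Matrix.one_mulVec] at this
  intro i
  have := congrFun hDv i
  simp only [Pi.smul_apply, smul_eq_mul, Pi.zero_apply, mul_eq_zero] at this
  exact this.resolve_left hD0

lemma MBW_lower {s : ℕ} (A : Matrix (Fin 3) (Fin s) ℤ) (p : ℕ) [Fact p.Prime]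
    (x : Fin s → ℚ_[p]) (hx : NonsingularSol A x) :
    ∃ m : ℕ, ∀ h, (p ^ h) ^ (s - 3) ≤ MBW A (p ^ (m + h)) ∧ 3 ≤ s := by
  obtain ⟨e, y, hdet, hy, hsol⟩ := exists_integral_sol A p x hx
  have he : Function.Injective e := by
    intro k l hkl
    by_contra hne
    apply hdet
    exact Matrix.det_zero_of_column_eq hne (fun i => by simp [hkl])
  obtain ⟨m, hm⟩ := hensel_lift A p e y hdet hy hsol
  refine ⟨m, fun h => ⟨?_, by simpa using Fintype.card_le_of_injective e he⟩⟩
  let J := {j : Fin s // j ∉ Set.range e}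
  have hJ : Fintype.card J = s - 3 := by
    rw [Fintype.card_subtype_compl]
    have h3 : Fintype.card {x // x ∈ Set.range e} = 3 := by
      have := Set.card_range_of_injective he
      rw [Fintype.card_fin] at this
      convert this
    rw [h3, Fintype.card_fin]
  let xt : (J → Fin (p ^ h)) → Fin s → ℤ_[p] := fun t j =>
    if hj : j ∉ Set.range e then y j + (p : ℤ_[p]) ^ m * ((t ⟨j, hj⟩ : ℕ) : ℤ_[p]) else y j
  have hxt : ∀ t j, (p : ℤ_[p]) ^ m ∣ xt t j - y j := by
    intro t j
    simp only [xt]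
    split_ifs
    · simp
    · simp
  choose z hz1 hz2 using fun t => hm (xt t) (hxt t)
  have : NeZero (p ^ (m + h)) := ⟨pow_ne_zero _ (Fact.out : p.Prime).ne_zero⟩
  let Φ : (J → Fin (p ^ h)) →
      {u : Fin s → ZMod (p ^ (m + h)) // ∀ i, ∑ j, (A i j : ZMod (p ^ (m + h))) * u j ^ 4 = 0} :=
    fun t => ⟨fun j => PadicInt.toZModPow (m + h) (z t j), fun i => by
      have := congrArg (PadicInt.toZModPow (m + h)) (hz2 t i)
      simpa [map_sum] using this⟩
  have hΦ : Function.Injective Φ := by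
    intro t t' htt
    funext j
    have h1 := congrFun (congrArg Subtype.val htt) j.1
    simp only [Φ] at h1
    rw [hz1 t _ j.2, hz1 t' _ j.2] at h1
    simp only [xt, dif_pos j.2] at h1
    simp only [map_add, map_mul, map_pow, map_natCast, add_right_inj] at h1
    have h2 : ((p ^ m * (t j : ℕ) : ℕ) : ZMod (p ^ (m + h))) = ((p ^ m * (t' j : ℕ) : ℕ) : ZMod _) := by
      push_cast; exact h1
    rw [ZMod.natCast_eq_natCast_iff, pow_add] at h2
    have h3 := Nat.ModEq.mul_left_cancel' (pow_ne_zero _ (Fact.out : p.Prime).ne_zero) h2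
    exact Fin.ext (Nat.ModEq.eq_of_lt_of_lt h3 (t j).2 (t' j).2)
  have := Nat.card_le_card_of_injective Φ hΦ
  rw [Nat.card_eq_fintype_card] at this
  simpa [hJ, MBW] using this

lemma ABW_zero {s : ℕ} (A : Matrix (Fin 3) (Fin s) ℤ) : ABW A 0 = 0 := (fA A).map_zero

lemma ABW_one {s : ℕ} (A : Matrix (Fin 3) (Fin s) ℤ) : ABW A 1 = 1 := (fA_mult A).1

lemma local_pos {s : ℕ} (A : Matrix (Fin 3) (Fin s) ℤ) (p : ℕ) [hp : Fact p.Prime]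
    (x : Fin s → ℚ_[p]) (hx : NonsingularSol A x)
    (hsum : Summable (fun h : ℕ => ABW A (p ^ h))) :
    (∑' h : ℕ, ABW A (p ^ h)).im = 0 ∧ 0 < (∑' h : ℕ, ABW A (p ^ h)).re := by
  obtain ⟨m, hm⟩ := MBW_lower A p x hx
  have hs3 : 3 ≤ s := (hm 0).2
  have hp0 : (0 : ℝ) < p := by exact_mod_cast hp.out.pos
  set c : ℝ := (((p : ℝ) ^ m) ^ (s - 3))⁻¹ with hc
  have hcpos : 0 < c := by positivity
  have ht : Tendsto (fun h : ℕ => ∑ k ∈ Finset.range (m + h + 1), ABW A (p ^ k)) atTop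
      (nhds (∑' h : ℕ, ABW A (p ^ h))) := by
    have h1 := hsum.hasSum.tendsto_sum_nat
    refine h1.comp ?_
    refine tendsto_atTop_mono (fun h => ?_) tendsto_id
    simp only [id]; omega
  have hclosed : IsClosed {w : ℂ | w.im = 0 ∧ c ≤ w.re} :=
    (isClosed_eq Complex.continuous_im continuous_const).inter
      (isClosed_le continuous_const Complex.continuous_re)
  have hmem : ∀ h : ℕ, ∑ k ∈ Finset.range (m + h + 1), ABW A (p ^ k) ∈
      {w : ℂ | w.im = 0 ∧ c ≤ w.re} := by
    intro h
    rw [sum_ABW_prime_pow A p hp.out (m + h)]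
    have hcast : (((p ^ (m + h) : ℕ) : ℂ) ^ (-(s : ℤ)) *
        (((p ^ (m + h) : ℕ) : ℂ) ^ 3 * (MBW A (p ^ (m + h)) : ℂ)))
        = (((((p ^ (m + h) : ℕ) : ℝ) ^ (-(s : ℤ)) *
        (((p ^ (m + h) : ℕ) : ℝ) ^ 3 * (MBW A (p ^ (m + h)) : ℝ))) : ℝ) : ℂ) := by
      push_cast; rfl
    rw [hcast]
    refine ⟨Complex.ofReal_im _, ?_⟩
    rw [Complex.ofReal_re]
    have hM : (((p : ℝ) ^ h) ^ (s - 3)) ≤ (MBW A (p ^ (m + h)) : ℝ) := by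
      exact_mod_cast (hm h).1
    have hq : (0 : ℝ) < ((p ^ (m + h) : ℕ) : ℝ) := by push_cast; positivity
    calc c = ((p ^ (m + h) : ℕ) : ℝ) ^ (-(s : ℤ)) *
        (((p ^ (m + h) : ℕ) : ℝ) ^ 3 * ((p : ℝ) ^ h) ^ (s - 3)) := by
          obtain ⟨t, rfl⟩ := Nat.exists_eq_add_of_le hs3
          rw [zpow_neg, zpow_natCast, hc]
          have : 3 + t - 3 = t := by omega
          rw [this]
          push_cast
          rw [pow_add ((p : ℝ) ^ (m + h)) 3 t, pow_add, mul_pow _ _ t]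
          field_simp
      _ ≤ _ := by gcongr
  have := hclosed.mem_of_tendsto ht (Eventually.of_forall hmem)
  exact ⟨this.1, hcpos.trans_le this.2⟩

lemma norm_local_sub_one {s : ℕ} (A : Matrix (Fin 3) (Fin s) ℤ) (C : ℝ) (hC : 0 < C)
    (hb : ∀ q : ℕ, 1 ≤ q → ‖ABW A q‖ ≤ C * ((q : ℝ) ^ 2)⁻¹) (p : ℕ) (hp : p.Prime) :
    Summable (fun h : ℕ => ABW A (p ^ h)) ∧
      ‖∑' h : ℕ, ABW A (p ^ h) - 1‖ ≤ 2 * C * ((p : ℝ) ^ 2)⁻¹ := by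
  have hp2 : (2 : ℝ) ≤ p := by exact_mod_cast hp.two_le
  set r : ℝ := ((p : ℝ) ^ 2)⁻¹ with hr
  have hr0 : 0 < r := by positivity
  have hr1 : r ≤ 1 / 2 := by
    rw [hr, inv_le_comm₀ (by positivity) (by norm_num)]
    nlinarith
  have hbd : ∀ h : ℕ, ‖ABW A (p ^ h)‖ ≤ C * r ^ h := by
    intro h
    refine (hb _ (Nat.one_le_pow _ _ hp.pos)).trans (le_of_eq ?_)
    rw [hr]; push_cast; rw [inv_pow, ← pow_mul, ← pow_mul, mul_comm h 2]
  have hg : Summable (fun h : ℕ => C * r ^ h) :=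
    (summable_geometric_of_lt_one hr0.le (by linarith)).mul_left C
  have hsum : Summable (fun h : ℕ => ABW A (p ^ h)) := Summable.of_norm_bounded hg hbd
  refine ⟨hsum, ?_⟩
  rw [hsum.tsum_eq_zero_add]
  simp only [pow_zero, ABW_one, add_sub_cancel_left]
  have hg' : HasSum (fun h : ℕ => C * r * r ^ h) (C * r * (1 - r)⁻¹) :=
    (hasSum_geometric_of_lt_one hr0.le (by linarith)).mul_left _
  have h1 : ‖∑' h : ℕ, ABW A (p ^ (h + 1))‖ ≤ C * r * (1 - r)⁻¹ :=
    tsum_of_norm_bounded hg' (fun h => (hbd (h + 1)).trans (le_of_eq (by ring)))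
  refine h1.trans ?_
  have h2 : (1 - r)⁻¹ ≤ 2 := by
    rw [inv_le_comm₀ (by linarith) (by norm_num)]; linarith
  calc C * r * (1 - r)⁻¹ ≤ C * r * 2 := by gcongr
    _ = 2 * C * r := by ring

lemma series_pos {s : ℕ} (A : Matrix (Fin 3) (Fin s) ℤ) (C : ℝ) (hC : 0 < C)
    (hb : ∀ q : ℕ, 1 ≤ q → ‖ABW A q‖ ≤ C * ((q : ℝ) ^ 2)⁻¹)
    (hsum : Summable (fun q : ℕ => ‖ABW A q‖))
    (hloc : ∀ (p : ℕ) [Fact p.Prime], ∃ x : Fin s → ℚ_[p], NonsingularSol A x) :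
    (∑' q, ABW A q).im = 0 ∧ 0 < (∑' q, ABW A q).re := by
  have hprod : HasProd (fun p : Nat.Primes => ∑' e, ABW A ((p : ℕ) ^ e)) (∑' n, ABW A n) :=
    EulerProduct.eulerProduct_hasProd (f := ABW A) (ABW_one A)
      (fun {m n} h => (fA_mult A).2 h) hsum (ABW_zero A)
  have hl : ∀ p : Nat.Primes, (∑' e, ABW A ((p : ℕ) ^ e)).im = 0 ∧
      0 < (∑' e, ABW A ((p : ℕ) ^ e)).re := by
    intro p
    have : Fact (p : ℕ).Prime := ⟨p.2⟩
    obtain ⟨x, hx⟩ := hloc p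
    exact local_pos A p x hx (norm_local_sub_one A C hC hb p p.2).1
  have hclosed : IsClosed {w : ℂ | w.im = 0 ∧ 0 ≤ w.re} :=
    (isClosed_eq Complex.continuous_im continuous_const).inter
      (isClosed_le continuous_const Complex.continuous_re)
  have hmem : ∀ F : Finset Nat.Primes, ∏ p ∈ F, ∑' e, ABW A ((p : ℕ) ^ e) ∈
      {w : ℂ | w.im = 0 ∧ 0 ≤ w.re} := by
    intro F
    induction F using Finset.induction_on with
    | empty => simp
    | insert a F ha ih =>
      rw [Finset.prod_insert ha]
      obtain ⟨h1, h2⟩ := ih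
      obtain ⟨h3, h4⟩ := hl a
      refine ⟨?_, ?_⟩
      · rw [Complex.mul_im, h1, h3]; simp
      · rw [Complex.mul_re, h1, h3]; simp only [mul_zero, sub_zero]; positivity
  have hS : (∑' n, ABW A n) ∈ {w : ℂ | w.im = 0 ∧ 0 ≤ w.re} := by
    have : Tendsto (fun F : Finset Nat.Primes => ∏ p ∈ F, ∑' e, ABW A ((p : ℕ) ^ e)) atTop
      (nhds (∑' n, ABW A n)) := hprod
    exact hclosed.mem_of_tendsto this (Eventually.of_forall hmem)
  have hne : (∑' n, ABW A n) ≠ 0 := by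
    rw [← hprod.tprod_eq]
    have h1 : ∀ p : Nat.Primes, 1 + (∑' e, ABW A ((p : ℕ) ^ e) - 1) = ∑' e, ABW A ((p : ℕ) ^ e) :=
      fun p => by ring
    have h2 := tprod_one_add_ne_zero_of_summable
      (f := fun p : Nat.Primes => ∑' e, ABW A ((p : ℕ) ^ e) - 1)
      (fun p h => by
        rw [h1] at h
        have := (hl p).2
        rw [h] at this
        simp at this)
      (by
        have hs2 : Summable (fun n : ℕ => 2 * C * ((n : ℝ) ^ 2)⁻¹) :=
          (Real.summable_nat_pow_inv.mpr (by norm_num)).mul_left _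
        refine Summable.of_nonneg_of_le (fun _ => norm_nonneg _)
          (fun p => (norm_local_sub_one A C hC hb p p.2).2)
          (hs2.comp_injective (i := fun p : Nat.Primes => (p : ℕ)) Subtype.val_injective))
    simpa only [h1] using h2
  refine ⟨hS.1, lt_of_le_of_ne hS.2 (fun h => hne ?_)⟩
  exact Complex.ext h.symm hS.1

theorem stmt14 {s : ℕ} (hs : 32 ≤ s) (A : Matrix (Fin 3) (Fin s) ℤ)
    (hA : Propitious A) :
    (∀ ε > (0 : ℝ), ∃ C > (0 : ℝ), ∀ q : ℕ, 1 ≤ q →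
      ‖ABW A q‖ ≤ C * (q : ℝ) ^ (ε - 5 / 3)) ∧
    Summable (fun q : ℕ => ‖ABW A q‖) ∧
    ∃ S : ℂ,
      Tendsto (fun N : ℕ => ∑ q ∈ Finset.Icc 1 N, ABW A q) atTop (nhds S) ∧
      (∃ C' > (0 : ℝ), ∀ X : ℝ, 1 ≤ X →
        ‖S - ∑ q ∈ Finset.Icc 1 ⌊X⌋₊, ABW A q‖ ≤ C' * X ^ (-(1 : ℝ) / 2)) ∧
      ((∀ (p : ℕ) [Fact p.Prime], ∃ x : Fin s → ℚ_[p], NonsingularSol A x) →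
        S.im = 0 ∧ 0 < S.re) := by
  obtain ⟨C, hC, hb⟩ := exists_bound hs A hA
  have hs2 : Summable (fun n : ℕ => C * ((n : ℝ) ^ 2)⁻¹) :=
    (Real.summable_nat_pow_inv.mpr (by norm_num)).mul_left _
  have hsum : Summable (fun q : ℕ => ‖ABW A q‖) := by
    refine Summable.of_nonneg_of_le (fun _ => norm_nonneg _) (fun q => ?_) hs2
    rcases Nat.eq_zero_or_pos q with rfl | hq
    · rw [ABW_zero]; simp
    · exact hb q hq
  have hT : Tendsto (fun N : ℕ => ∑ q ∈ Finset.Icc 1 N, ABW A q) atTop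
      (nhds (∑' q, ABW A q)) := by
    have h1 := (hsum.of_norm.hasSum.tendsto_sum_nat).comp (tendsto_add_atTop_nat 1)
    refine h1.congr (fun N => ?_)
    simp only [Function.comp]
    rw [Finset.sum_range_succ', ABW_zero, add_zero, Finset.range_eq_Ico,
      Finset.sum_Ico_add' (ABW A) 0 N 1]
    rfl
  refine ⟨?_, hsum, ∑' q, ABW A q, hT, ⟨2 * C, by positivity, ?_⟩, series_pos A C hC hb hsum⟩
  · intro ε hε
    refine ⟨C, hC, fun q hq => (hb q hq).trans ?_⟩
    have hq1 : (1 : ℝ) ≤ q := by exact_mod_cast hq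
    gcongr
    rw [← Real.rpow_natCast, ← Real.rpow_neg (by positivity)]
    apply Real.rpow_le_rpow_of_exponent_le hq1
    push_cast
    linarith
  · intro X hX
    set N := ⌊X⌋₊ with hN
    have hN1 : 1 ≤ N := Nat.le_floor (by simpa using hX)
    have hNr : (1 : ℝ) ≤ N := by exact_mod_cast hN1
    have hXN : X < N + 1 := Nat.lt_floor_add_one X
    have hbd : ∀ᶠ n : ℕ in atTop,
        ‖∑ q ∈ Finset.Icc 1 n, ABW A q - ∑ q ∈ Finset.Icc 1 N, ABW A q‖ ≤ C * (N : ℝ)⁻¹ := by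
      filter_upwards [eventually_ge_atTop N] with n hn
      have hsplit : ∑ q ∈ Finset.Icc 1 n, ABW A q - ∑ q ∈ Finset.Icc 1 N, ABW A q
          = ∑ q ∈ Finset.Ioc N n, ABW A q := by
        have := Finset.sum_Ioc_consecutive (ABW A) (Nat.zero_le N) hn
        rw [show Finset.Icc 1 n = Finset.Ioc 0 n from rfl,
          show Finset.Icc 1 N = Finset.Ioc 0 N from rfl, ← this]
        ring
      rw [hsplit]
      calc ‖∑ q ∈ Finset.Ioc N n, ABW A q‖ ≤ ∑ q ∈ Finset.Ioc N n, C * ((q : ℝ) ^ 2)⁻¹ :=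
            norm_sum_le_of_le _ (fun q hq => hb q (by rw [Finset.mem_Ioc] at hq; omega))
        _ = C * ∑ q ∈ Finset.Ioc N n, ((q : ℝ) ^ 2)⁻¹ := by rw [Finset.mul_sum]
        _ ≤ C * ((N : ℝ)⁻¹ - (n : ℝ)⁻¹) := by
            gcongr
            exact sum_Ioc_inv_sq_le_sub (by omega) hn
        _ ≤ C * (N : ℝ)⁻¹ := by
            gcongr
            have : (0 : ℝ) ≤ (n : ℝ)⁻¹ := by positivity
            linarith
    have hlim := le_of_tendsto ((hT.sub_const (∑ q ∈ Finset.Icc 1 N, ABW A q)).norm) hbd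
    refine hlim.trans ?_
    have h1 : (N : ℝ)⁻¹ ≤ 2 * X⁻¹ := by
      rw [← div_eq_mul_inv, inv_eq_one_div, div_le_div_iff₀ (by positivity) (by positivity)]
      linarith
    have h2 : X⁻¹ ≤ X ^ (-(1 : ℝ) / 2) := by
      rw [← Real.rpow_neg_one]
      exact Real.rpow_le_rpow_of_exponent_le hX (by norm_num)
    calc C * (N : ℝ)⁻¹ ≤ C * (2 * X ^ (-(1 : ℝ) / 2)) := by
          gcongr; exact h1.trans (by gcongr)
      _ = 2 * C * X ^ (-(1 : ℝ) / 2) := by ring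
end
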